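/- arXiv:0812.3084 — 2 statements merged into one kernel-verified Lean document; each statement's English description precedes it below -/
import Mathlib

section
/- For fixed ρ > 0, as n → ∞ one has lim (σ_V²/n) = g_V(ρ), and moreover g_V(ρ) > 0. -/
open MeasureTheory ProbabilityTheory Filter Set Metric
open scoped ENNReal NNReal BigOperators Topology Classical

noncomputable section

/-- Side length `n^(1/d)` of the cube `C_n` of volume `n` in dimension `d`. -/
def sideLen (d n : ℕ) : ℝ := (n : ℝ) ^ ((d : ℝ)⁻¹)

/-- The cube `C_n = [0, L)^d`. -/
def box (d : ℕ) (L : ℝ) : Set (Fin d → ℝ) := Set.univ.pi fun _ => Set.Ico (0 : ℝ) L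

/-- The Euclidean toroidal distance on the cube `[0, L)^d`. -/
def torDist {d : ℕ} (L : ℝ) (x y : Fin d → ℝ) : ℝ :=
  Real.sqrt (∑ i, (⨅ k : ℤ, |x i - y i - k * L|) ^ 2)

/-- The toroidal ball `B_r(x) = {y ∈ C_n : D(x,y) ≤ r}`. -/
def torBall {d : ℕ} (L : ℝ) (x : Fin d → ℝ) (r : ℝ) : Set (Fin d → ℝ) :=
  {y ∈ box d L | torDist L x y ≤ r}

/-- Addition (translation) in the torus `[0, L)^d`. -/
def torAdd {d : ℕ} (L : ℝ) (y x : Fin d → ℝ) : Fin d → ℝ :=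
  fun i => L * Int.fract ((y i + x i) / L)

/-- The uniform probability measure on the cube `[0, L)^d`. -/
def uniformBox (d : ℕ) (L : ℝ) : Measure (Fin d → ℝ) :=
  ((L.toNNReal ^ d)⁻¹ : ℝ≥0) • volume.restrict (box d L)

/-- The joint law of `n` independent points uniformly distributed on the cube `C_n`
of volume `n`; a point configuration is `ω : Fin n → (Fin d → ℝ)`, with `U_i = ω i`. -/
def binppLaw (d n : ℕ) : Measure (Fin n → Fin d → ℝ) :=
  Measure.pi fun _ => uniformBox d (sideLen d n)

/-- The total covered volume `V` of the union of toroidal balls of radius `ρ`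
centered at the `n` points. -/
def coveredVol (d n : ℕ) (ρ : ℝ) (ω : Fin n → Fin d → ℝ) : ℝ :=
  (volume (⋃ i, torBall (sideLen d n) (ω i) ρ)).toReal

/-- The number `S` of isolated points: indices `i` with `𝒰_n ∩ B_ρ(U_i) = {U_i}`. -/
def isolCount (d n : ℕ) (ρ : ℝ) (ω : Fin n → Fin d → ℝ) : ℝ :=
  ∑ i, if Set.range ω ∩ torBall (sideLen d n) (ω i) ρ = {ω i} then 1 else 0

/-- `π_d`: the volume of the unit ball in `ℝ^d`. -/
def unitBallVol (d : ℕ) : ℝ :=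
  (volume (Metric.closedBall (0 : EuclideanSpace ℝ (Fin d)) 1)).toReal

/-- `φ = π_d ρ^d`. -/
def phi (d : ℕ) (ρ : ℝ) : ℝ := unitBallVol d * ρ ^ d

/-- The standard normal cumulative distribution function. -/
def stdGaussCDF (t : ℝ) : ℝ := (gaussianReal 0 1 (Set.Iic t)).toReal

/-- The Kolmogorov distance `D_X` between the law of the standardized version of `X`
and the standard normal. -/
def kolDist {Ω : Type*} [MeasurableSpace Ω] (P : Measure Ω) (X : Ω → ℝ) : ℝ :=
  ⨆ t : ℝ,
    |(P {ω | (X ω - ∫ x, X x ∂P) / Real.sqrt (variance X P) ≤ t}).toReal - stdGaussCDF t|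

/-- A fixed unit vector in `ℝ^d` (junk value `0` if `d = 0`). -/
def unitVec (d : ℕ) : EuclideanSpace ℝ (Fin d) :=
  if h : 0 < d then EuclideanSpace.single (⟨0, h⟩ : Fin d) 1 else 0

/-- `ω_d(r)`: the volume of the union of two unit balls in `ℝ^d` whose centers are
at distance `r` apart. -/
def omegaVol (d : ℕ) (r : ℝ) : ℝ :=
  (volume (Metric.closedBall (0 : EuclideanSpace ℝ (Fin d)) 1 ∪
      Metric.closedBall (r • unitVec d) 1)).toReal

/-- The integral `J_{r,d}(ρ) = d π_d ∫_0^r exp(-ρ^d ω_d(t)) t^{d-1} dt`. -/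
def Jint (r : ℝ) (d : ℕ) (ρ : ℝ) : ℝ :=
  d * unitBallVol d * ∫ t in (0:ℝ)..r, Real.exp (-(ρ ^ d * omegaVol d t)) * t ^ (d - 1)

/-- The limiting variance density `g_V(ρ)`. -/
def gV (d : ℕ) (ρ : ℝ) : ℝ :=
  ρ ^ d * Jint 2 d ρ - (2 ^ d * phi d ρ + phi d ρ ^ 2) * Real.exp (-(2 * phi d ρ))

/-- The limiting variance density `g_S(ρ)`. -/
def gS (d : ℕ) (ρ : ℝ) : ℝ :=
  Real.exp (-phi d ρ) - (1 + (2 ^ d - 2) * phi d ρ + phi d ρ ^ 2) * Real.exp (-(2 * phi d ρ))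
    + ρ ^ d * (Jint 2 d ρ - Jint 1 d ρ)

/-- `κ_d`: the maximum number of closed unit balls in `ℝ^d` that can be packed so that
they all intersect a closed unit ball at the origin but are pairwise disjoint. -/
def kappa (d : ℕ) : ℕ :=
  sSup {k : ℕ | ∃ c : Fin k → EuclideanSpace ℝ (Fin d),
    (∀ i, (Metric.closedBall (c i) 1 ∩ Metric.closedBall 0 1).Nonempty) ∧
    Pairwise fun i j => Disjoint (Metric.closedBall (c i) 1) (Metric.closedBall (c j) 1)}

/-- `η_V(n, ρ)`. -/
def etaV (d n : ℕ) (ρ : ℝ) : ℝ :=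
  2 * phi d ρ ^ 2 * ((3 ^ d + 1) * phi d ρ + 1) ^ 2 *
      (1 + (2 ^ d + 1) * 6 ^ d * phi d ρ +
        ((2 * n - 6 ^ d * phi d ρ) / (n - 6 ^ d * phi d ρ)) * 6 ^ (2 * d) * phi d ρ ^ 2) +
    2 * phi d ρ ^ 4 *
      (3 * (4 ^ d + 2 ^ d) * phi d ρ +
        3 * 4 ^ d * phi d ρ ^ 2 * ((2 * n - 3 * 2 ^ d * phi d ρ) / (n - 3 * 2 ^ d * phi d ρ)) +
        4 + 2 / n)

/-- `η_S(n, ρ)`. -/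
def etaS (d n : ℕ) (ρ : ℝ) : ℝ :=
  2 * (1 + 2 * (kappa d : ℝ)) ^ 2 *
      (1 + (2 ^ d + 1) * 3 ^ d * phi d ρ +
        ((2 * n - 3 ^ d * phi d ρ) / (n - 3 ^ d * phi d ρ)) * 9 ^ d * phi d ρ ^ 2) +
    (((1 : ℝ) + kappa d) ^ 2 / 2) *
      ((2 ^ d + 2 * 3 ^ d + 3) * phi d ρ +
        (2 ^ (d + 1) + 1) *
          ((2 * n - (2 ^ (d + 1) + 1) * phi d ρ) / (n - (2 ^ (d + 1) + 1) * phi d ρ)) *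
          phi d ρ ^ 2 +
        (4 * n - 2) / (n - 1))

section absG
set_option linter.unusedSectionVars false
variable {G : Type*} [AddCommGroup G] [MeasurableSpace G] [MeasurableAdd₂ G] [MeasurableNeg G]

/-- indicator of the complement -/
def hcomp (B : Set G) (g : G) : ℝ := Bᶜ.indicator (fun _ => (1:ℝ)) g

lemma hcomp_meas {B : Set G} (hB : MeasurableSet B) : Measurable (hcomp B) :=
  measurable_const.indicator hB.compl

lemma hcomp_nonneg (B : Set G) (g : G) : 0 ≤ hcomp B g :=
  Set.indicator_nonneg (fun _ _ => zero_le_one) g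

lemma hcomp_le (B : Set G) (g : G) : hcomp B g ≤ 1 := by
  unfold hcomp; by_cases h : g ∈ Bᶜ <;> simp [h]

lemma var_abs (lam : Measure G) [IsFiniteMeasure lam] [lam.IsAddLeftInvariant]
    (N : ℝ) (hN : lam.real univ = N) (c : ℝ≥0) (hc : (c:ℝ) * N = 1) (n : ℕ)
    (B : Set G) (hB : MeasurableSet B) (hsym : ∀ g, -g ∈ B ↔ g ∈ B) :
    Measurable (fun ω : Fin n → G => lam.real (⋃ i, {g | g - ω i ∈ B})) ∧
    variance (fun ω : Fin n → G => lam.real (⋃ i, {g | g - ω i ∈ B}))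
      (Measure.pi fun _ => c • lam) =
      N * ∫ w, (1 - c * lam.real (B ∪ {g | g - w ∈ B})) ^ n ∂lam
        - (N * (1 - c * lam.real B) ^ n) ^ 2 := by
  have : lam.IsAddRightInvariant := inferInstance
  have hprob : IsProbabilityMeasure (c • lam) := by
    constructor
    have : (c • lam).real univ = 1 := by
      rw [measureReal_nnreal_smul_apply, hN]; exact hc
    rw [measureReal_def] at this
    rw [← ENNReal.ofReal_toReal (measure_ne_top (c • lam) univ), this]; simp
  set P : Measure (Fin n → G) := Measure.pi fun _ => c • lam with hP
  set F : (Fin n → G) → G → ℝ := fun ω x => ∏ i, hcomp B (x - ω i) with hF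
  have hFm : Measurable (Function.uncurry F) := by
    refine Finset.measurable_fun_prod _ fun i _ => ?_
    exact (hcomp_meas hB).comp (measurable_snd.sub ((measurable_pi_apply i).comp measurable_fst))
  have hF0 : ∀ ω x, 0 ≤ F ω x := fun ω x => Finset.prod_nonneg fun i _ => hcomp_nonneg _ _
  have hF1 : ∀ ω x, F ω x ≤ 1 := fun ω x =>
    Finset.prod_le_one (fun i _ => hcomp_nonneg _ _) (fun i _ => hcomp_le _ _)
  have hFm' : ∀ ω, Measurable (F ω) := fun ω => hFm.comp measurable_prodMk_left
  set W : (Fin n → G) → ℝ := fun ω => ∫ x, F ω x ∂lam with hW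
  have hWm : Measurable W :=
    (hFm.stronglyMeasurable.integral_prod_right (ν := lam)).measurable
  have hVW : (fun ω : Fin n → G => lam.real (⋃ i, {g | g - ω i ∈ B})) = fun ω => N - W ω := by
    funext ω
    have hm : MeasurableSet (⋃ i, {g | g - ω i ∈ B}) :=
      MeasurableSet.iUnion fun i => (measurable_id.sub_const (ω i)) hB
    have : W ω = lam.real (⋃ i, {g | g - ω i ∈ B})ᶜ := by
      rw [← integral_indicator_one hm.compl]
      refine integral_congr_ae (.of_forall fun x => ?_)
      simp only [hF]
      by_cases hx : x ∈ ⋃ i, {g | g - ω i ∈ B}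
      · obtain ⟨i, hi⟩ := mem_iUnion.1 hx
        rw [Set.indicator_of_notMem (by simpa using hx)]
        refine Finset.prod_eq_zero (Finset.mem_univ i) ?_
        simp only [mem_ofPred_eq] at hi
        simp [hcomp, hi]
      · rw [Set.indicator_of_mem hx]
        refine Finset.prod_eq_one fun i _ => ?_
        have : x - ω i ∉ B := fun h => hx (mem_iUnion.2 ⟨i, h⟩)
        simp [hcomp, this]
    rw [this, measureReal_compl hm, hN]; ring
  have hbd : ∀ ω, ‖W ω‖ ≤ N := by
    intro ω
    refine (norm_integral_le_of_norm_le_const (C := 1) (.of_forall fun x => ?_)).trans ?_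
    · rw [Real.norm_of_nonneg (hF0 _ _)]; exact hF1 _ _
    · rw [hN]; simp
  rw [hVW]
  refine ⟨hWm.const_sub N, ?_⟩
  rw [variance_const_sub hWm.aestronglyMeasurable, variance_eq_sub
    (MemLp.of_bound hWm.aestronglyMeasurable N (.of_forall hbd))]
  have hshift : ∀ x (u : G), x - u ∈ B ↔ u - x ∈ B := fun x u => by rw [← hsym, neg_sub]
  have hq : ∀ x y, ∫ u, hcomp B (x - u) * hcomp B (y - u) ∂(c • lam)
      = 1 - c * lam.real (B ∪ {g | g - (y - x) ∈ B}) := by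
    intro x y
    have hm : MeasurableSet {u : G | x - u ∈ B ∨ y - u ∈ B} :=
      ((measurable_const.sub measurable_id) hB).union ((measurable_const.sub measurable_id) hB)
    have h1 : ∀ u, hcomp B (x - u) * hcomp B (y - u) =
        ({u : G | x - u ∈ B ∨ y - u ∈ B}ᶜ).indicator 1 u := by
      intro u
      by_cases h1 : x - u ∈ B <;> by_cases h2 : y - u ∈ B <;> simp [hcomp, h1, h2]
    simp_rw [h1]
    rw [integral_indicator_one hm.compl, measureReal_compl hm, probReal_univ,
      measureReal_nnreal_smul_apply]
    congr 2
    have h2 : {u : G | x - u ∈ B ∨ y - u ∈ B} =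
        (fun u => u + (-x)) ⁻¹' (B ∪ {g | g - (y - x) ∈ B}) := by
      ext u
      simp only [mem_ofPred_eq, mem_preimage, mem_union, hshift x u, hshift y u]
      rw [show u + -x - (y - x) = u - y by abel, ← sub_eq_add_neg]
    rw [h2, measureReal_def, measureReal_def, measure_preimage_add_right]
  have hq1 : ∀ x, ∫ u, hcomp B (x - u) ∂(c • lam) = 1 - c * lam.real B := by
    intro x
    have := hq x x
    have hh : ∀ g, hcomp B g * hcomp B g = hcomp B g := fun g => by
      by_cases h : g ∈ B <;> simp [hcomp, h]
    simp only [hh, sub_self, sub_zero, ofPred_mem_eq, union_self] at this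
    exact this
  have hEW : ∫ ω, W ω ∂P = N * (1 - c * lam.real B) ^ n := by
    simp only [hW]
    rw [integral_integral_swap]
    · have : ∀ x, ∫ ω, F ω x ∂P = (1 - c * lam.real B) ^ n := by
        intro x
        simp only [hF, hP]
        rw [integral_fintype_prod_eq_pow (fun u => hcomp B (x - u)), hq1, Fintype.card_fin]
      simp_rw [this]
      rw [integral_const, hN, smul_eq_mul]
    · refine Integrable.of_bound hFm.aestronglyMeasurable 1 (.of_forall fun z => ?_)
      simp only [Function.uncurry]
      rw [Real.norm_of_nonneg (hF0 _ _)]; exact hF1 _ _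
  have hEW2 : ∫ ω, (W ^ 2) ω ∂P =
      N * ∫ w, (1 - c * lam.real (B ∪ {g | g - w ∈ B})) ^ n ∂lam := by
    have h1 : ∀ ω, (W ^ 2) ω = ∫ z : G × G, F ω z.1 * F ω z.2 ∂(lam.prod lam) := by
      intro ω
      rw [integral_prod_mul, Pi.pow_apply, sq]
    simp_rw [h1]
    rw [integral_integral_swap]
    · have h2 : ∀ z : G × G, ∫ ω, F ω z.1 * F ω z.2 ∂P =
          (1 - c * lam.real (B ∪ {g | g - (z.2 - z.1) ∈ B})) ^ n := by
        intro z
        simp only [hF, hP, ← Finset.prod_mul_distrib]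
        rw [integral_fintype_prod_eq_pow (fun u => hcomp B (z.1 - u) * hcomp B (z.2 - u)), hq,
          Fintype.card_fin]
      simp_rw [h2]
      have hm0 : Measurable fun w => lam.real (B ∪ {g | g - w ∈ B}) := by
        have : MeasurableSet {p : G × G | p.2 ∈ B ∨ p.2 - p.1 ∈ B} :=
          (measurable_snd hB).union ((measurable_snd.sub measurable_fst) hB)
        exact (measurable_measure_prodMk_left (ν := lam) this).ennreal_toReal
      have hm1 : Measurable fun w => (1 - c * lam.real (B ∪ {g | g - w ∈ B})) ^ n :=
        ((hm0.const_mul _).const_sub _).pow_const _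
      rw [integral_prod]
      · have : ∀ x, ∫ y, (1 - c * lam.real (B ∪ {g | g - (y - x) ∈ B})) ^ n ∂lam =
           ∫ w, (1 - c * lam.real (B ∪ {g | g - w ∈ B})) ^ n ∂lam := fun x =>
          integral_sub_right_eq_self
            (fun w => (1 - c * lam.real (B ∪ {g | g - w ∈ B})) ^ n) x
        simp only [this]
        rw [integral_const, hN, smul_eq_mul]
      · refine Integrable.of_bound
          (hm1.comp (measurable_snd.sub measurable_fst)).aestronglyMeasurable 1
          (.of_forall fun z => ?_)
        rw [← h2 z]
        refine (norm_integral_le_of_norm_le_const (C := 1) (.of_forall fun ω => ?_)).trans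
          (by simp)
        rw [Real.norm_of_nonneg (mul_nonneg (hF0 _ _) (hF0 _ _))]
        exact mul_le_one₀ (hF1 _ _) (hF0 _ _) (hF1 _ _)
    · refine Integrable.of_bound (Measurable.aestronglyMeasurable ?_) 1 (.of_forall fun z => ?_)
      · exact (hFm.comp (measurable_fst.prodMk (measurable_fst.comp measurable_snd))).mul
          (hFm.comp (measurable_fst.prodMk (measurable_snd.comp measurable_snd)))
      · simp only [Function.uncurry]
        rw [Real.norm_of_nonneg (mul_nonneg (hF0 _ _) (hF0 _ _))]
        exact mul_le_one₀ (hF1 _ _) (hF0 _ _) (hF1 _ _)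
  rw [hEW, hEW2]
end absG

section torus
set_option linter.unusedSectionVars false
variable {d : ℕ} {L : ℝ} [hL : Fact (0 < L)]

/-- projection to the torus -/
def pr (L : ℝ) (x : Fin d → ℝ) : Fin d → AddCircle L := fun i => (x i : AddCircle L)

/-- ball in the torus -/
def Bt (d : ℕ) (L ρ : ℝ) : Set (Fin d → AddCircle L) := {g | Real.sqrt (∑ i, ‖g i‖ ^ 2) ≤ ρ}

lemma Bt_closed (ρ : ℝ) : IsClosed (Bt d L ρ) := by
  refine isClosed_le ?_ continuous_const
  fun_prop

lemma iInf_eq_norm (a : ℝ) : (⨅ k : ℤ, |a - k * L|) = ‖(a : AddCircle L)‖ := by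
  apply le_antisymm
  · rw [AddCircle.norm_eq]
    exact ciInf_le ⟨0, by rintro _ ⟨k, rfl⟩; exact abs_nonneg _⟩ _
  · refine le_ciInf fun k => ?_
    have : (a : AddCircle L) = ((a - k * L : ℝ) : AddCircle L) := by
      rw [← zsmul_eq_mul, AddCircle.coe_sub, AddCircle.coe_zsmul, AddCircle.coe_period]; simp
    rw [this]
    exact QuotientAddGroup.norm_mk_le_norm

lemma torBall_eq (x : Fin d → ℝ) (ρ : ℝ) :
    torBall L x ρ = box d L ∩ pr L ⁻¹' {g | g - pr L x ∈ Bt d L ρ} := by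
  ext y
  simp only [torBall, torDist, iInf_eq_norm, Bt, pr, mem_ofPred_eq, mem_inter_iff, mem_preimage,
    Pi.sub_apply]
  have : ∀ i, ‖((x i - y i : ℝ) : AddCircle L)‖ = ‖(y i : AddCircle L) - (x i : AddCircle L)‖ := by
    intro i
    rw [norm_sub_rev, AddCircle.coe_sub]
  simp only [this]

lemma mp_box : MeasurePreserving (pr L) (volume.restrict (box d L)) volume := by
  have h : volume.restrict (box d L) =
      Measure.pi (fun _ : Fin d => (volume : Measure ℝ).restrict (Ioc 0 (0 + L))) := by
    rw [box, volume_pi, Measure.restrict_pi_pi]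
    congr 1
    funext i
    rw [zero_add]
    exact Measure.restrict_congr_set Ico_ae_eq_Ioc
  rw [h, volume_pi]
  exact measurePreserving_pi _ _ fun i => AddCircle.measurePreserving_mk L 0

/-- centered box in Euclidean space -/
def cbox (d : ℕ) (L : ℝ) : Set (EuclideanSpace ℝ (Fin d)) :=
  {w | ∀ i, w i ∈ Ioc (-(L/2)) (-(L/2) + L)}

/-- projection from Euclidean space -/
def prE (L : ℝ) (x : EuclideanSpace ℝ (Fin d)) : Fin d → AddCircle L := pr L x.ofLp

lemma mp_cbox : MeasurePreserving (prE L) (volume.restrict (cbox d L)) volume := by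
  have h1 : MeasurePreserving (pr L)
      (volume.restrict (univ.pi fun _ : Fin d => Ioc (-(L/2)) (-(L/2) + L))) volume := by
    rw [volume_pi, Measure.restrict_pi_pi, volume_pi]
    exact measurePreserving_pi _ _ fun i => AddCircle.measurePreserving_mk L _
  have h2 := (PiLp.volume_preserving_ofLp (Fin d)).restrict_preimage
    (s := univ.pi fun _ : Fin d => Ioc (-(L/2)) (-(L/2) + L))
    (MeasurableSet.univ_pi fun _ => measurableSet_Ioc)
  have h3 : (WithLp.ofLp ⁻¹' (univ.pi fun _ : Fin d => Ioc (-(L/2)) (-(L/2) + L)) :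
      Set (EuclideanSpace ℝ (Fin d))) = cbox d L := by
    ext w; simp [cbox]
  rw [h3] at h2
  exact h1.comp h2

lemma cbox_meas : MeasurableSet (cbox d L) := by
  have h3 : (WithLp.ofLp ⁻¹' (univ.pi fun _ : Fin d => Ioc (-(L/2)) (-(L/2) + L)) :
      Set (EuclideanSpace ℝ (Fin d))) = cbox d L := by
    ext w; simp [cbox]
  rw [← h3]
  exact (PiLp.volume_preserving_ofLp (Fin d)).measurable
    (MeasurableSet.univ_pi fun _ => measurableSet_Ioc)

/-- volume of the intersection of two balls -/
def Ivol (d : ℕ) (ρ : ℝ) (w : EuclideanSpace ℝ (Fin d)) : ℝ :=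
  volume.real (closedBall (0 : EuclideanSpace ℝ (Fin d)) ρ ∩ closedBall w ρ)

lemma phi_eq (d : ℕ) {ρ : ℝ} (hρ : 0 < ρ) (w : EuclideanSpace ℝ (Fin d)) :
    volume.real (closedBall w ρ) = phi d ρ := by
  rw [measureReal_def, Measure.addHaar_closedBall _ _ hρ.le, ENNReal.toReal_mul,
    ENNReal.toReal_ofReal (by positivity), finrank_euclideanSpace_fin, phi, unitBallVol,
    Measure.addHaar_closedBall _ _ zero_le_one, mul_comm]
  simp

lemma coord_le (w : EuclideanSpace ℝ (Fin d)) (i : Fin d) : |w i| ≤ ‖w‖ :=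
  PiLp.norm_apply_le w i

lemma norm_coe_of_le {a : ℝ} (h : |a| ≤ L / 2) : ‖(a : AddCircle L)‖ = |a| := by
  rw [AddCircle.norm_coe_eq_abs_iff L hL.out.ne', abs_of_pos hL.out]; exact h

lemma cbox_abs {w : EuclideanSpace ℝ (Fin d)} (hw : w ∈ cbox d L) (i : Fin d) :
    |w i| ≤ L / 2 := by
  have := hw i
  rw [abs_le]; constructor <;> linarith [this.1, this.2]

lemma prE_sub (z w : EuclideanSpace ℝ (Fin d)) : prE L z - prE L w = prE L (z - w) := by
  funext i; simp [prE, pr]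

lemma coord_Bt {g : Fin d → AddCircle L} {ρ : ℝ} (hg : g ∈ Bt d L ρ) (i : Fin d) :
    ‖g i‖ ≤ ρ := by
  refine le_trans ?_ hg
  apply Real.le_sqrt_of_sq_le
  exact Finset.single_le_sum (f := fun i => ‖g i‖^2) (fun _ _ => sq_nonneg _) (Finset.mem_univ i)

lemma prE_mem_of {z : EuclideanSpace ℝ (Fin d)} {ρ : ℝ} (hz : ∀ i, |z i| ≤ L / 2) :
    prE L z ∈ Bt d L ρ ↔ ‖z‖ ≤ ρ := by
  simp only [Bt, mem_ofPred_eq, prE, pr, EuclideanSpace.norm_eq, Real.norm_eq_abs]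
  simp only [norm_coe_of_le (hz _)]

lemma cball_subset {ρ : ℝ} (h : 6 * ρ < L) :
    closedBall (0 : EuclideanSpace ℝ (Fin d)) (2*ρ) ⊆ cbox d L := by
  intro w hw i
  rw [mem_closedBall_zero_iff] at hw
  have h1 := abs_le.1 ((coord_le w i).trans hw)
  have := hL.out
  constructor <;> linarith

lemma Bt_vol {ρ : ℝ} (hρ : 0 < ρ) (h : 6 * ρ < L) :
    volume.real (Bt d L ρ) = phi d ρ := by
  rw [← phi_eq d hρ 0, measureReal_def, measureReal_def,
    ← mp_cbox.measure_preimage (Bt_closed ρ).measurableSet.nullMeasurableSet,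
    Measure.restrict_apply (mp_cbox.measurable (Bt_closed ρ).measurableSet)]
  congr 2
  ext z
  constructor
  · rintro ⟨h1, h2⟩
    rw [mem_closedBall_zero_iff]
    exact (prE_mem_of (cbox_abs h2)).1 h1
  · intro hz
    have h2 : z ∈ cbox d L := cball_subset h (closedBall_subset_closedBall (by linarith) hz)
    rw [mem_closedBall_zero_iff] at hz
    exact ⟨(prE_mem_of (cbox_abs h2)).2 hz, h2⟩

lemma Bt_inter_vol {ρ : ℝ} (hρ : 0 < ρ) (h : 6 * ρ < L) {w : EuclideanSpace ℝ (Fin d)}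
    (hw : w ∈ cbox d L) :
    volume.real (Bt d L ρ ∩ {g | g - prE L w ∈ Bt d L ρ}) = Ivol d ρ w := by
  have hm : MeasurableSet (Bt d L ρ ∩ {g | g - prE L w ∈ Bt d L ρ}) :=
    (Bt_closed ρ).measurableSet.inter
      ((measurable_id.sub_const (prE L w)) (Bt_closed ρ).measurableSet)
  rw [Ivol, measureReal_def, measureReal_def,
    ← mp_cbox.measure_preimage hm.nullMeasurableSet,
    Measure.restrict_apply (mp_cbox.measurable hm)]
  congr 2
  ext z
  simp only [mem_inter_iff, mem_preimage, mem_ofPred_eq, prE_sub, mem_closedBall_zero_iff]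
  rw [mem_closedBall, dist_eq_norm]
  constructor
  · rintro ⟨⟨h1, h2⟩, h3⟩
    have h1' := (prE_mem_of (cbox_abs h3)).1 h1
    refine ⟨h1', (prE_mem_of fun i => ?_).1 h2⟩
    have a1 : |z i| ≤ ρ := (coord_le z i).trans h1'
    have a2 : |w i| ≤ 2 * ρ := by
      rw [← norm_coe_of_le (cbox_abs hw i)]
      have b1 := coord_Bt h1 i
      have b2 := coord_Bt h2 i
      rw [← prE_sub] at b2
      calc ‖(w i : AddCircle L)‖ = ‖prE L z i - (prE L z - prE L w) i‖ := by
            simp [prE, pr]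
        _ ≤ _ := norm_sub_le _ _
        _ ≤ _ := by linarith
    have : |(z - w) i| ≤ |z i| + |w i| := abs_sub (z i) (w i)
    linarith
  · rintro ⟨h1, h2⟩
    have h3 : z ∈ cbox d L := cball_subset h (by rw [mem_closedBall_zero_iff]; linarith)
    refine ⟨⟨(prE_mem_of (cbox_abs h3)).2 h1, (prE_mem_of fun i => ?_).2 h2⟩, h3⟩
    have := (coord_le (z - w) i).trans h2
    linarith

lemma Bt_union_vol {ρ : ℝ} (hρ : 0 < ρ) (h : 6 * ρ < L) {w : EuclideanSpace ℝ (Fin d)}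
    (hw : w ∈ cbox d L) :
    volume.real (Bt d L ρ ∪ {g | g - prE L w ∈ Bt d L ρ}) = 2 * phi d ρ - Ivol d ρ w := by
  have hm : MeasurableSet {g | g - prE L w ∈ Bt d L ρ} :=
      ((measurable_id.sub_const (prE L w)) (Bt_closed ρ).measurableSet)
  have h1 := measureReal_union_add_inter (μ := volume) (s := Bt d L ρ) hm
  rw [Bt_inter_vol hρ h hw, Bt_vol hρ h] at h1
  have h2 : volume.real {g | g - prE L w ∈ Bt d L ρ} = phi d ρ := by
    rw [← Bt_vol hρ h, measureReal_def, measureReal_def,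
      ← measure_preimage_add_right volume (-prE L w) (Bt d L ρ)]
    simp only [← sub_eq_add_neg]
    rfl
  rw [h2] at h1
  linarith

lemma var_formula {n : ℕ} (hn : 0 < n) (hside : sideLen d n = L) (hvol : L ^ d = n)
    {ρ : ℝ} (hρ : 0 < ρ) (h : 6 * ρ < L) :
    variance (coveredVol d n ρ) (binppLaw d n) / n =
      (∫ w in cbox d L, (1 - (2 * phi d ρ - Ivol d ρ w) / n) ^ n)
        - n * ((1 - phi d ρ / n) ^ n) ^ 2 := by
  have hn' : (0:ℝ) < n := by exact_mod_cast hn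
  set c : ℝ≥0 := (L.toNNReal ^ d)⁻¹ with hc
  have hcr : (c : ℝ) = (n:ℝ)⁻¹ := by
    rw [hc]; push_cast; rw [Real.coe_toNNReal _ hL.out.le, hvol]
  have huniv : (volume : Measure (Fin d → AddCircle L)).real univ = n := by
    rw [measureReal_def, volume_pi, Measure.pi_univ]
    simp [AddCircle.measure_univ, ENNReal.toReal_ofReal hL.out.le, hvol]
  obtain ⟨hm, hv⟩ := var_abs (volume : Measure (Fin d → AddCircle L)) n huniv c
    (by rw [hcr]; field_simp) n (Bt d L ρ) (Bt_closed ρ).measurableSet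
    (fun g => by simp [Bt])
  have hmp : MeasurePreserving (fun (ω : Fin n → Fin d → ℝ) i => pr L (ω i)) (binppLaw d n)
      (Measure.pi fun _ => c • (volume : Measure (Fin d → AddCircle L))) := by
    rw [binppLaw]
    refine measurePreserving_pi _ _ fun i => ?_
    rw [uniformBox, hside]
    exact mp_box.smul_measure c
  have hcov : coveredVol d n ρ = fun ω => volume.real
      (⋃ i, {g | g - (fun i => pr L (ω i)) i ∈ Bt d L ρ}) := by
    funext ω
    have hms : MeasurableSet (⋃ i, {g | g - pr L (ω i) ∈ Bt d L ρ}) :=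
      MeasurableSet.iUnion fun i =>
        ((measurable_id.sub_const (pr L (ω i))) (Bt_closed ρ).measurableSet)
    rw [coveredVol, hside, measureReal_def,
      ← mp_box.measure_preimage hms.nullMeasurableSet,
      Measure.restrict_apply (mp_box.measurable hms)]
    simp only [torBall_eq]
    rw [← inter_iUnion, inter_comm, preimage_iUnion]
  rw [hcov, hmp.variance_fun_comp
    (f := fun ω => volume.real (⋃ i, {g | g - ω i ∈ Bt d L ρ})) hm.aemeasurable, hv,
    Bt_vol hρ h, hcr]
  have hint : ∫ w, (1 - (n:ℝ)⁻¹ * volume.real (Bt d L ρ ∪ {g | g - w ∈ Bt d L ρ})) ^ n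
      = ∫ w in cbox d L, (1 - (2 * phi d ρ - Ivol d ρ w) / n) ^ n := by
    have hmeas : Measurable fun w : Fin d → AddCircle L =>
        (1 - (n:ℝ)⁻¹ * volume.real (Bt d L ρ ∪ {g | g - w ∈ Bt d L ρ})) ^ n := by
      have hB := (Bt_closed (d := d) (L := L) ρ).measurableSet
      have : MeasurableSet {p : (Fin d → AddCircle L) × (Fin d → AddCircle L) |
          p.2 ∈ Bt d L ρ ∨ p.2 - p.1 ∈ Bt d L ρ} :=
        (measurable_snd hB).union ((measurable_snd.sub measurable_fst) hB)
      have := (measurable_measure_prodMk_left (ν := volume) this).ennreal_toReal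
      exact ((this.const_mul _).const_sub _).pow_const _
    have e := integral_map (μ := volume.restrict (cbox d L)) (φ := prE L)
      mp_cbox.measurable.aemeasurable hmeas.aestronglyMeasurable
    rw [mp_cbox.map_eq] at e
    rw [e]
    refine setIntegral_congr_fun cbox_meas fun w hw => ?_
    rw [Bt_union_vol hρ h hw, inv_mul_eq_div]
  rw [hint]
  field_simp
end torus

section analysis
open scoped Pointwise
variable {d : ℕ}

lemma Ivol_nonneg (ρ : ℝ) (w : EuclideanSpace ℝ (Fin d)) : 0 ≤ Ivol d ρ w := measureReal_nonneg

lemma Ivol_le {ρ : ℝ} (hρ : 0 < ρ) (w : EuclideanSpace ℝ (Fin d)) : Ivol d ρ w ≤ phi d ρ := by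
  rw [← phi_eq d hρ 0]
  exact measureReal_mono inter_subset_left measure_closedBall_lt_top.ne

lemma phi_pos (d : ℕ) {ρ : ℝ} (hρ : 0 < ρ) : 0 < phi d ρ := by
  rw [← phi_eq d hρ 0]
  exact ENNReal.toReal_pos (measure_closedBall_pos _ _ hρ).ne' measure_closedBall_lt_top.ne

lemma Ivol_zero {ρ : ℝ} {w : EuclideanSpace ℝ (Fin d)} (hw : 2 * ρ < ‖w‖) :
    Ivol d ρ w = 0 := by
  rw [Ivol, (closedBall_disjoint_closedBall (by rw [dist_zero_left]; linarith)).inter_eq]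
  simp

lemma Ivol_pos {ρ : ℝ} {w : EuclideanSpace ℝ (Fin d)} (hw : ‖w‖ < ρ) :
    0 < Ivol d ρ w := by
  have hρ : 0 < ρ := (norm_nonneg w).trans_lt hw
  refine ENNReal.toReal_pos ?_
    ((measure_mono inter_subset_left).trans_lt measure_closedBall_lt_top).ne
  have ho : IsOpen (ball (0 : EuclideanSpace ℝ (Fin d)) ρ ∩ ball w ρ) :=
    isOpen_ball.inter isOpen_ball
  have hp := ho.measure_pos volume ⟨0, mem_ball_self hρ, by simpa using hw⟩
  exact (hp.trans_le (measure_mono (inter_subset_inter ball_subset_closedBall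
    ball_subset_closedBall))).ne'

lemma Ivol_meas (ρ : ℝ) : Measurable (Ivol d ρ) := by
  have : MeasurableSet {p : EuclideanSpace ℝ (Fin d) × EuclideanSpace ℝ (Fin d) |
      ‖p.2‖ ≤ ρ ∧ ‖p.2 - p.1‖ ≤ ρ} := by
    have h1 : MeasurableSet {p : EuclideanSpace ℝ (Fin d) × EuclideanSpace ℝ (Fin d) |
      ‖p.2‖ ≤ ρ} := measurableSet_le (by fun_prop) (by fun_prop)
    have h2 : MeasurableSet {p : EuclideanSpace ℝ (Fin d) × EuclideanSpace ℝ (Fin d) |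
      ‖p.2 - p.1‖ ≤ ρ} := measurableSet_le (by fun_prop) (by fun_prop)
    exact h1.inter h2
  have := (measurable_measure_prodMk_left (ν := volume) this).ennreal_toReal
  convert this using 2 with w
  rw [Ivol, measureReal_def]
  congr 2
  ext z
  simp [dist_eq_norm]

lemma Ivol_integral {ρ : ℝ} (hρ : 0 < ρ) : ∫ w, Ivol d ρ w = phi d ρ ^ 2 := by
  have hS : MeasurableSet {p : EuclideanSpace ℝ (Fin d) × EuclideanSpace ℝ (Fin d) |
      ‖p.2‖ ≤ ρ ∧ ‖p.2 - p.1‖ ≤ ρ} := by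
    have h1 : MeasurableSet {p : EuclideanSpace ℝ (Fin d) × EuclideanSpace ℝ (Fin d) |
      ‖p.2‖ ≤ ρ} := measurableSet_le (by fun_prop) (by fun_prop)
    have h2 : MeasurableSet {p : EuclideanSpace ℝ (Fin d) × EuclideanSpace ℝ (Fin d) |
      ‖p.2 - p.1‖ ≤ ρ} := measurableSet_le (by fun_prop) (by fun_prop)
    exact h1.inter h2
  have h1 : ∀ w, ENNReal.ofReal (Ivol d ρ w) = volume (Prod.mk w ⁻¹'
      {p : EuclideanSpace ℝ (Fin d) × EuclideanSpace ℝ (Fin d) |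
      ‖p.2‖ ≤ ρ ∧ ‖p.2 - p.1‖ ≤ ρ}) := by
    intro w
    rw [Ivol, ofReal_measureReal ((measure_mono inter_subset_left).trans_lt
      measure_closedBall_lt_top).ne]
    congr 1
    ext z
    simp [dist_eq_norm]
  rw [integral_eq_lintegral_of_nonneg_ae (.of_forall (Ivol_nonneg ρ))
    (Ivol_meas ρ).aestronglyMeasurable]
  simp_rw [h1]
  rw [← Measure.prod_apply hS, Measure.prod_apply_symm hS]
  have h2 : ∀ z : EuclideanSpace ℝ (Fin d), volume ((fun w => (w, z)) ⁻¹'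
      {p : EuclideanSpace ℝ (Fin d) × EuclideanSpace ℝ (Fin d) |
      ‖p.2‖ ≤ ρ ∧ ‖p.2 - p.1‖ ≤ ρ}) =
      (closedBall 0 ρ).indicator (fun _ => ENNReal.ofReal (phi d ρ)) z := by
    intro z
    by_cases hz : z ∈ closedBall (0 : EuclideanSpace ℝ (Fin d)) ρ
    · rw [indicator_of_mem hz, ← phi_eq d hρ z, ofReal_measureReal measure_closedBall_lt_top.ne]
      congr 1
      ext w
      rw [mem_closedBall_zero_iff] at hz
      simp [hz, dist_eq_norm, norm_sub_rev w z]
    · rw [indicator_of_notMem hz]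
      rw [mem_closedBall_zero_iff] at hz
      simp [hz]
  simp_rw [h2]
  rw [lintegral_indicator isClosed_closedBall.measurableSet, setLIntegral_const, ENNReal.toReal_mul,
    ENNReal.toReal_ofReal (phi_pos d hρ).le, ← measureReal_def, phi_eq d hρ, sq]

lemma union_vol {ρ : ℝ} (hρ : 0 < ρ) (w : EuclideanSpace ℝ (Fin d)) :
    volume.real (closedBall (0 : EuclideanSpace ℝ (Fin d)) ρ ∪ closedBall w ρ)
      = 2 * phi d ρ - Ivol d ρ w := by
  have := measureReal_union_add_inter (μ := volume)
    (s := closedBall (0 : EuclideanSpace ℝ (Fin d)) ρ) (t := closedBall w ρ)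
    isClosed_closedBall.measurableSet measure_closedBall_lt_top.ne measure_closedBall_lt_top.ne
  rw [phi_eq d hρ, phi_eq d hρ] at this
  rw [Ivol]; linarith

lemma omega_eq (hd : 1 ≤ d) {ρ : ℝ} (hρ : 0 < ρ) (z : EuclideanSpace ℝ (Fin d)) :
    ρ ^ d * omegaVol d ‖z‖ = 2 * phi d ρ - Ivol d ρ (ρ • z) := by
  rw [← union_vol hρ]
  have hu : ‖unitVec d‖ = 1 := by
    rw [unitVec, dif_pos (by omega)]; simp
  have hnorm : ‖‖z‖ • unitVec d‖ = ‖z‖ := by rw [norm_smul, hu]; simp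
  have h1 : omegaVol d ‖z‖ = volume.real (closedBall (0 : EuclideanSpace ℝ (Fin d)) 1 ∪
      closedBall z 1) := by
    have hR := Submodule.reflection_sub hnorm
    set R := (Submodule.span ℝ {‖z‖ • unitVec d - z})ᗮ.reflection
    rw [omegaVol, measureReal_def, ← R.measurePreserving.measure_preimage
      (s := closedBall 0 1 ∪ closedBall z 1)
      (isClosed_closedBall.measurableSet.union isClosed_closedBall.measurableSet).nullMeasurableSet,
      preimage_union, R.preimage_closedBall, R.preimage_closedBall,
      show R.symm z = ‖z‖ • unitVec d by rw [R.symm_apply_eq, hR]]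
    simp
  rw [h1]
  have h2 : closedBall (0 : EuclideanSpace ℝ (Fin d)) ρ ∪ closedBall (ρ • z) ρ =
      ρ • (closedBall (0 : EuclideanSpace ℝ (Fin d)) 1 ∪ closedBall z 1) := by
    rw [smul_set_union, _root_.smul_closedBall _ _ zero_le_one,
      _root_.smul_closedBall _ _ zero_le_one]
    simp [abs_of_pos hρ]
  rw [h2, measureReal_def, measureReal_def, Measure.addHaar_smul, ENNReal.toReal_mul,
    finrank_euclideanSpace_fin, abs_of_pos (by positivity), ENNReal.toReal_ofReal (by positivity)]

lemma J_eq (hd : 1 ≤ d) {ρ : ℝ} (hρ : 0 < ρ) :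
    ρ ^ d * Jint 2 d ρ = ∫ w in closedBall (0 : EuclideanSpace ℝ (Fin d)) (2 * ρ),
      Real.exp (-(2 * phi d ρ - Ivol d ρ w)) := by
  have : Nonempty (Fin d) := ⟨⟨0, by omega⟩⟩
  have h0 := integral_fun_norm_addHaar (volume : Measure (EuclideanSpace ℝ (Fin d)))
    ((Iic (2:ℝ)).indicator fun t => Real.exp (-(ρ ^ d * omegaVol d t)))
  have h1 : Jint 2 d ρ = ∫ z : EuclideanSpace ℝ (Fin d),
      (Iic (2:ℝ)).indicator (fun t => Real.exp (-(ρ ^ d * omegaVol d t))) ‖z‖ := by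
    rw [h0, finrank_euclideanSpace_fin, Jint, nsmul_eq_mul, smul_eq_mul, mul_assoc]
    congr 1
    congr 1
    · rw [unitBallVol, measureReal_def, Measure.addHaar_closedBall_eq_addHaar_ball]
    · rw [intervalIntegral.integral_of_le (by norm_num), ← Ioi_inter_Iic, inter_comm,
        ← Measure.restrict_restrict measurableSet_Iic, ← integral_indicator measurableSet_Iic]
      congr 1
      funext y
      by_cases hy : y ∈ Iic (2:ℝ) <;> simp [hy, indicator, mul_comm]
  have h2 : ∀ z : EuclideanSpace ℝ (Fin d),
      (Iic (2:ℝ)).indicator (fun t => Real.exp (-(ρ ^ d * omegaVol d t))) ‖z‖ =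
      (closedBall (0 : EuclideanSpace ℝ (Fin d)) (2 * ρ)).indicator
        (fun w => Real.exp (-(2 * phi d ρ - Ivol d ρ w))) (ρ • z) := by
    intro z
    have : ‖z‖ ∈ Iic (2:ℝ) ↔ ρ • z ∈ closedBall (0 : EuclideanSpace ℝ (Fin d)) (2 * ρ) := by
      rw [mem_closedBall_zero_iff, norm_smul, Real.norm_of_nonneg hρ.le, mul_comm,
        mul_le_mul_iff_left₀ hρ]; rfl
    by_cases h : ‖z‖ ∈ Iic (2:ℝ)
    · rw [indicator_of_mem h, indicator_of_mem (this.1 h), omega_eq hd hρ]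
    · rw [indicator_of_notMem h, indicator_of_notMem (this.not.1 h)]
  rw [h1]
  simp_rw [h2]
  rw [Measure.integral_comp_smul volume ((closedBall (0 : EuclideanSpace ℝ (Fin d))
    (2 * ρ)).indicator (fun w => Real.exp (-(2 * phi d ρ - Ivol d ρ w)))) ρ,
    finrank_euclideanSpace_fin, abs_of_pos (by positivity),
    integral_indicator isClosed_closedBall.measurableSet, smul_eq_mul, ← mul_assoc,
    mul_inv_cancel₀ (by positivity), one_mul]

lemma ball2_vol {ρ : ℝ} (hρ : 0 < ρ) :
    volume.real (closedBall (0 : EuclideanSpace ℝ (Fin d)) (2 * ρ)) = 2 ^ d * phi d ρ := by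
  rw [phi_eq d (by positivity), phi, phi, mul_pow]; ring

lemma bdd_int {ρ : ℝ} {f : EuclideanSpace ℝ (Fin d) → ℝ} (hf : Measurable f) (C : ℝ)
    (hC : ∀ w, |f w| ≤ C) : IntegrableOn f (closedBall 0 (2 * ρ)) :=
  Measure.integrableOn_of_bounded measure_closedBall_lt_top.ne hf.aestronglyMeasurable
    (.of_forall hC)

lemma exp_int {ρ : ℝ} (hρ : 0 < ρ) : IntegrableOn
    (fun w => Real.exp (-(2 * phi d ρ - Ivol d ρ w))) (closedBall 0 (2 * ρ)) := by
  refine bdd_int ((Ivol_meas ρ).const_sub _).neg.exp 1 fun w => ?_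
  rw [abs_of_pos (Real.exp_pos _), Real.exp_le_one_iff]
  linarith [Ivol_le hρ w, phi_pos d hρ]

lemma const_int {ρ c : ℝ} : IntegrableOn (fun _ : EuclideanSpace ℝ (Fin d) => c)
    (closedBall 0 (2 * ρ)) :=
  bdd_int measurable_const |c| fun _ => le_rfl

lemma gV_eq1 (hd : 1 ≤ d) {ρ : ℝ} (hρ : 0 < ρ) :
    gV d ρ = (∫ w in closedBall (0 : EuclideanSpace ℝ (Fin d)) (2 * ρ),
      (Real.exp (-(2 * phi d ρ - Ivol d ρ w)) - Real.exp (-(2 * phi d ρ))))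
      - phi d ρ ^ 2 * Real.exp (-(2 * phi d ρ)) := by
  rw [integral_sub (exp_int hρ) const_int, setIntegral_const, ball2_vol hρ, ← J_eq hd hρ, gV,
    smul_eq_mul]
  ring

lemma gV_pos (hd : 1 ≤ d) {ρ : ℝ} (hρ : 0 < ρ) : 0 < gV d ρ := by
  have hIint : IntegrableOn (Ivol d ρ) (closedBall 0 (2 * ρ)) :=
    bdd_int (Ivol_meas ρ) (phi d ρ) fun w => by
      rw [abs_of_nonneg (Ivol_nonneg ρ w)]; exact Ivol_le hρ w
  have hI : ∫ w in closedBall (0 : EuclideanSpace ℝ (Fin d)) (2 * ρ), Ivol d ρ w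
      = phi d ρ ^ 2 := by
    rw [← Ivol_integral hρ]
    refine setIntegral_eq_integral_of_forall_compl_eq_zero fun w hw => Ivol_zero ?_
    simpa using hw
  have hsub : IntegrableOn (fun w : EuclideanSpace ℝ (Fin d) =>
      Real.exp (-(2 * phi d ρ - Ivol d ρ w)) - Real.exp (-(2 * phi d ρ)))
      (closedBall 0 (2 * ρ)) := (exp_int hρ).sub const_int
  have hsub2 : IntegrableOn (fun w : EuclideanSpace ℝ (Fin d) =>
      Real.exp (-(2 * phi d ρ - Ivol d ρ w)) - Real.exp (-(2 * phi d ρ))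
        - Ivol d ρ w * Real.exp (-(2 * phi d ρ)))
      (closedBall 0 (2 * ρ)) := hsub.sub (hIint.mul_const _)
  have key : gV d ρ = ∫ w in closedBall (0 : EuclideanSpace ℝ (Fin d)) (2 * ρ),
      ((Real.exp (-(2 * phi d ρ - Ivol d ρ w)) - Real.exp (-(2 * phi d ρ)))
        - Ivol d ρ w * Real.exp (-(2 * phi d ρ))) := by
    rw [gV_eq1 hd hρ, integral_sub hsub (hIint.mul_const _),
      integral_mul_const, hI]
  have hfac : ∀ w, (Real.exp (-(2 * phi d ρ - Ivol d ρ w)) - Real.exp (-(2 * phi d ρ)))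
        - Ivol d ρ w * Real.exp (-(2 * phi d ρ)) =
        Real.exp (-(2 * phi d ρ)) * (Real.exp (Ivol d ρ w) - (Ivol d ρ w + 1)) := by
    intro w
    rw [show -(2 * phi d ρ - Ivol d ρ w) = -(2 * phi d ρ) + Ivol d ρ w by ring, Real.exp_add]
    ring
  rw [key, setIntegral_pos_iff_support_of_nonneg_ae
    (.of_forall fun w => by
      simp only [hfac]
      exact mul_nonneg (Real.exp_pos _).le (sub_nonneg.2 (Real.add_one_le_exp _)))
    hsub2]
  refine (measure_ball_pos volume (0 : EuclideanSpace ℝ (Fin d)) hρ).trans_le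
    (measure_mono fun w hw => ?_)
  rw [mem_ball_zero_iff] at hw
  refine ⟨?_, by rw [mem_closedBall_zero_iff]; linarith⟩
  rw [Function.mem_support, hfac]
  exact (mul_pos (Real.exp_pos _) (sub_pos.2 (Real.add_one_lt_exp (Ivol_pos hw).ne'))).ne'

lemma tendsto_pow1 (a : ℝ) :
    Tendsto (fun n : ℕ => (1 - a / n) ^ n) atTop (𝓝 (Real.exp (-a))) := by
  have := Real.tendsto_one_add_div_pow_exp (-a)
  refine this.congr fun n => ?_
  rw [neg_div, ← sub_eq_add_neg]

lemma tendsto_inv_aux (a : ℝ) : Tendsto (fun n : ℕ => 1 - a / (n:ℝ)) atTop (𝓝 1) := by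
  have := (tendsto_const_div_atTop_nhds_zero_nat a).const_sub 1
  simpa using this

lemma tendsto_diff (a : ℝ) (ha : 0 < a) :
    Tendsto (fun n : ℕ => n * (1 - 2 * a / n) ^ n - n * ((1 - a / n) ^ n) ^ 2) atTop
      (𝓝 (-(a ^ 2 * Real.exp (-(2 * a))))) := by
  have hlo : Tendsto (fun n : ℕ => -(a ^ 2 * ((1 - a / n) ^ n) ^ 2 / (1 - a / n) ^ 2)) atTop
      (𝓝 (-(a ^ 2 * Real.exp (-(2 * a))))) := by
    have := (((((tendsto_pow1 a).pow 2).const_mul (a ^ 2)).div ((tendsto_inv_aux a).pow 2)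
      (by norm_num))).neg
    rw [← Real.exp_nat_mul, one_pow, div_one, Nat.cast_ofNat, mul_neg] at this
    exact this
  have hhi : Tendsto (fun n : ℕ => -(a ^ 2 * (1 - 2 * a / n) ^ n / (1 - 2 * a / n))) atTop
      (𝓝 (-(a ^ 2 * Real.exp (-(2 * a))))) := by
    have := (((tendsto_pow1 (2 * a)).const_mul (a ^ 2)).div (tendsto_inv_aux (2 * a))
      (by norm_num)).neg
    rw [div_one] at this
    exact this
  have hev : ∀ᶠ n : ℕ in atTop, 0 < n ∧ 2 * a < n :=
    (eventually_gt_atTop 0).and (tendsto_natCast_atTop_atTop.eventually_gt_atTop (2 * a))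
  have hid : ∀ n : ℕ, 0 < n → 2 * a < n →
      (0 < 1 - 2 * a / n ∧ 1 - 2 * a / n ≤ (1 - a / n) ^ 2) ∧
      n * (1 - 2 * a / n) ^ n - n * ((1 - a / n) ^ n) ^ 2 =
      -(a ^ 2 / n * ∑ i ∈ Finset.range n, ((1 - a / n) ^ 2) ^ i * (1 - 2 * a / n) ^ (n - 1 - i)) := by
    intro n hn hna
    have hn' : (0:ℝ) < n := by exact_mod_cast hn
    have e1 : (1 - a / n) ^ 2 - (1 - 2 * a / n) = a ^ 2 / n ^ 2 := by field_simp; ring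
    refine ⟨⟨by rw [sub_pos, div_lt_one hn']; exact hna, ?_⟩, ?_⟩
    · have : 0 ≤ a ^ 2 / (n:ℝ) ^ 2 := by positivity
      linarith
    · have := geom_sum₂_mul ((1 - a / (n:ℝ)) ^ 2) (1 - 2 * a / n) n
      rw [e1, ← pow_mul, mul_comm 2 n, pow_mul] at this
      rw [← mul_sub, ← neg_sub, ← this]
      field_simp
  refine tendsto_of_tendsto_of_tendsto_of_le_of_le' hlo hhi ?_ ?_
  · filter_upwards [hev] with n ⟨hn, hna⟩
    obtain ⟨⟨p0, p1⟩, e⟩ := hid n hn hna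
    have hn' : (0:ℝ) < n := by exact_mod_cast hn
    rw [e, neg_le_neg_iff]
    set b := (1 - a / (n:ℝ)) ^ 2
    have hs : ∑ i ∈ Finset.range n, b ^ i * (1 - 2 * a / n) ^ (n - 1 - i) ≤ n * b ^ (n - 1) := by
      calc _ ≤ ∑ i ∈ Finset.range n, b ^ (n - 1) := by
            refine Finset.sum_le_sum fun i hi => ?_
            have hi' := Finset.mem_range.1 hi
            calc _ ≤ b ^ i * b ^ (n - 1 - i) := by gcongr
              _ = _ := by rw [← pow_add]; congr 1; omega
        _ = _ := by simp
    calc _ ≤ a ^ 2 / n * (n * b ^ (n - 1)) := by gcongr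
      _ = a ^ 2 * b ^ (n - 1) := by field_simp
      _ = _ := by
        have hb : b ≠ 0 := (p0.trans_le p1).ne'
        rw [← pow_mul (1 - a / (n:ℝ)) n 2, mul_comm n 2, pow_mul (1 - a / (n:ℝ)) 2 n]
        change _ = a ^ 2 * b ^ n / b
        obtain ⟨m, rfl⟩ : ∃ m, n = m + 1 := ⟨n - 1, by omega⟩
        rw [Nat.add_sub_cancel, pow_succ b m, ← mul_assoc, mul_div_cancel_right₀ _ hb]
  · filter_upwards [hev] with n ⟨hn, hna⟩
    obtain ⟨⟨p0, p1⟩, e⟩ := hid n hn hna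
    have hn' : (0:ℝ) < n := by exact_mod_cast hn
    rw [e, neg_le_neg_iff]
    set b := (1 - a / (n:ℝ)) ^ 2
    set q := (1 - 2 * a / (n:ℝ)) with hqdef
    have hs : n * q ^ (n - 1) ≤ ∑ i ∈ Finset.range n, b ^ i * q ^ (n - 1 - i) := by
      calc _ = ∑ i ∈ Finset.range n, q ^ (n - 1) := by simp
        _ ≤ _ := by
            refine Finset.sum_le_sum fun i hi => ?_
            have hi' := Finset.mem_range.1 hi
            calc _ = q ^ i * q ^ (n - 1 - i) := by rw [← pow_add]; congr 1; omega
              _ ≤ _ := by gcongr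
    calc _ = a ^ 2 * q ^ (n - 1) := by
            have hb : q ≠ 0 := p0.ne'
            obtain ⟨m, hm⟩ : ∃ m, n = m + 1 := ⟨n - 1, by omega⟩
            rw [show n - 1 = m by omega]
            rw [show q ^ n = q ^ m * q by rw [← pow_succ, hm]]; field_simp
      _ = a ^ 2 / n * (n * q ^ (n - 1)) := by field_simp
      _ ≤ _ := by gcongr

lemma tendsto_main {ρ : ℝ} (hρ : 0 < ρ) :
    Tendsto (fun n : ℕ => ∫ w in closedBall (0 : EuclideanSpace ℝ (Fin d)) (2 * ρ),
      ((1 - (2 * phi d ρ - Ivol d ρ w) / n) ^ n - (1 - 2 * phi d ρ / n) ^ n)) atTop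
    (𝓝 (∫ w in closedBall (0 : EuclideanSpace ℝ (Fin d)) (2 * ρ),
      (Real.exp (-(2 * phi d ρ - Ivol d ρ w)) - Real.exp (-(2 * phi d ρ))))) := by
  have hp := phi_pos d hρ
  have hb : ∀ (n : ℕ) (a : ℝ), 0 ≤ a → a < n → |(1 - a / n) ^ n| ≤ 1 := by
    intro n a ha han
    have hn : (0:ℝ) < n := ha.trans_lt han
    have h1 : a / n < 1 := (div_lt_one hn).2 han
    have h2 : 0 ≤ a / n := by positivity
    rw [abs_of_nonneg (pow_nonneg (by linarith) _)]
    exact pow_le_one₀ (by linarith) (by linarith)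
  refine tendsto_integral_filter_of_dominated_convergence (fun _ => 2) ?_ ?_ ?_ ?_
  · refine .of_forall fun n => Measurable.aestronglyMeasurable ?_
    exact (((((Ivol_meas ρ).const_sub _).div_const _).const_sub _).pow_const _).sub_const _
  · filter_upwards [tendsto_natCast_atTop_atTop.eventually_gt_atTop (2 * phi d ρ)] with n hn
    refine .of_forall fun w => ?_
    have h1 := hb n (2 * phi d ρ) (by linarith) hn
    have h2 := hb n (2 * phi d ρ - Ivol d ρ w) (by linarith [Ivol_le hρ w])
      (by linarith [Ivol_nonneg ρ w])
    rw [Real.norm_eq_abs]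
    refine (abs_sub _ _).trans (by linarith)
  · exact const_int
  · refine .of_forall fun w => ?_
    exact (tendsto_pow1 _).sub (tendsto_pow1 _)

lemma var_formula2 {L : ℝ} [hL : Fact (0 < L)] {n : ℕ} (hn : 0 < n) (hside : sideLen d n = L)
    (hvol : L ^ d = n) {ρ : ℝ} (hρ : 0 < ρ) (h : 6 * ρ < L) :
    variance (coveredVol d n ρ) (binppLaw d n) / n =
      (∫ w in closedBall (0 : EuclideanSpace ℝ (Fin d)) (2 * ρ),
        ((1 - (2 * phi d ρ - Ivol d ρ w) / n) ^ n - (1 - 2 * phi d ρ / n) ^ n))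
        + (n * (1 - 2 * phi d ρ / n) ^ n - n * ((1 - phi d ρ / n) ^ n) ^ 2) := by
  have hcv : volume (cbox d L) = n := by
    have := mp_cbox.measure_preimage (μa := volume.restrict (cbox d L))
      (f := prE L) (μb := volume) (s := univ) MeasurableSet.univ.nullMeasurableSet
    rw [preimage_univ, Measure.restrict_apply_univ] at this
    rw [this, volume_pi, Measure.pi_univ]
    simp only [AddCircle.measure_univ, Finset.prod_const, Finset.card_univ, Fintype.card_fin]
    rw [← ENNReal.ofReal_pow hL.out.le, hvol]; simp
  have hfin : IsFiniteMeasure (volume.restrict (cbox d L)) := ⟨by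
    rw [Measure.restrict_apply_univ, hcv]; exact ENNReal.natCast_lt_top n⟩
  rw [var_formula hn hside hvol hρ h,
    ← setIntegral_eq_of_subset_of_forall_sdiff_eq_zero cbox_meas (cball_subset h)]
  · rw [integral_sub _ (integrable_const _), setIntegral_const, measureReal_def, hcv]
    · simp only [ENNReal.toReal_natCast, smul_eq_mul]; ring
    · refine Integrable.of_bound (C := (1 + 2 * phi d ρ / n) ^ n) (Measurable.aestronglyMeasurable
        (((((Ivol_meas ρ).const_sub _).div_const _).const_sub _).pow_const _))
        (.of_forall fun w => ?_)
      rw [norm_pow]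
      have h1 := Ivol_nonneg ρ w
      have h2 := Ivol_le hρ w
      have h3 := phi_pos d hρ
      gcongr
      rw [Real.norm_eq_abs]
      refine (abs_sub _ _).trans ?_
      rw [abs_one, abs_div, Nat.abs_cast]
      gcongr
      rw [abs_of_nonneg (by linarith)]
      linarith
  · rintro w ⟨_, hw⟩
    rw [Ivol_zero (by simpa using hw)]
    simp
end analysis

/-- (3.2) of Theorem 2.3: the normalized variance of the covered volume `V`
converges to `g_V(ρ)`, which is strictly positive. -/
theorem variance_coveredVol_limit (d : ℕ) (hd : 1 ≤ d) (ρ : ℝ) (hρ : 0 < ρ) :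
    Tendsto (fun n : ℕ => variance (coveredVol d n ρ) (binppLaw d n) / n) atTop
        (nhds (gV d ρ)) ∧
      0 < gV d ρ := by
  refine ⟨?_, gV_pos hd hρ⟩
  have h := (tendsto_main (d := d) hρ).add (tendsto_diff (phi d ρ) (phi_pos d hρ))
  rw [← sub_eq_add_neg, ← gV_eq1 hd hρ] at h
  refine h.congr' ?_
  have hd' : (0:ℝ) < (d:ℝ)⁻¹ := by
    have : (0:ℝ) < d := by exact_mod_cast hd
    positivity
  have hlim : Tendsto (fun n : ℕ => sideLen d n) atTop atTop :=
    (tendsto_rpow_atTop hd').comp tendsto_natCast_atTop_atTop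
  filter_upwards [hlim.eventually_gt_atTop (6 * ρ), eventually_gt_atTop 0] with n hn hn0
  have : Fact (0 < sideLen d n) := ⟨by linarith⟩
  refine (var_formula2 (L := sideLen d n) hn0 rfl ?_ hρ hn).symm
  rw [sideLen, Real.rpow_inv_natCast_pow (by positivity) (by omega)]

end
end

section
/- For fixed ρ > 0, as n → ∞ one has lim (σ_S²/n) = g_S(ρ), and moreover g_S(ρ) > 0. -/
open MeasureTheory ProbabilityTheory Filter Set Metric
open scoped ENNReal NNReal BigOperators Topology Classical

noncomputable section

abbrev Tor (d : ℕ) (L : ℝ) := Fin d → AddCircle L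

def torQ (d : ℕ) (L : ℝ) (x : Fin d → ℝ) : Tor d L := fun i => (x i : AddCircle L)

def torN {d : ℕ} {L : ℝ} (u : Tor d L) : ℝ := Real.sqrt (∑ i, ‖u i‖ ^ 2)

def eN {d : ℕ} (x : Fin d → ℝ) : ℝ := ‖(WithLp.toLp 2 x : EuclideanSpace ℝ (Fin d))‖

lemma iInf_abs_eq (L t : ℝ) : (⨅ k : ℤ, |t - k * L|) = ‖(t : AddCircle L)‖ := by
  apply le_antisymm
  · rw [AddCircle.norm_eq]
    exact ciInf_le ⟨0, by rintro _ ⟨k, rfl⟩; exact abs_nonneg _⟩ (round (L⁻¹ * t))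
  · refine le_ciInf fun k => ?_
    have h : ((t - k * L : ℝ) : AddCircle L) = (t : AddCircle L) := by
      rw [AddCircle.coe_sub]
      have : ((k * L : ℝ) : AddCircle L) = 0 := by
        rw [AddCircle.coe_eq_zero_iff]
        exact ⟨k, by simp⟩
      rw [this, sub_zero]
    rw [← h]
    have := QuotientAddGroup.norm_mk_le_norm (S := AddSubgroup.zmultiples L) (m := t - k * L)
    simpa using this

lemma torDist_eq {d : ℕ} (L : ℝ) (x y : Fin d → ℝ) :
    torDist L x y = torN (torQ d L x - torQ d L y) := by
  unfold torDist torN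
  simp only [iInf_abs_eq]
  rfl

lemma torN_eq {d : ℕ} {L : ℝ} (u : Tor d L) :
    torN u = ‖(WithLp.toLp 2 u : PiLp 2 (fun _ : Fin d => AddCircle L))‖ := by
  rw [PiLp.norm_eq_of_L2]; rfl

lemma torN_add_le {d : ℕ} {L : ℝ} (u v : Tor d L) : torN (u + v) ≤ torN u + torN v := by
  simp only [torN_eq, WithLp.toLp_add]; exact norm_add_le _ _

lemma torN_neg {d : ℕ} {L : ℝ} (u : Tor d L) : torN (-u) = torN u := by
  simp [torN]

lemma torN_zero {d : ℕ} {L : ℝ} : torN (0 : Tor d L) = 0 := by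
  simp [torN]

lemma torN_sub_comm {d : ℕ} {L : ℝ} (u v : Tor d L) : torN (u - v) = torN (v - u) := by
  rw [← torN_neg, neg_sub]

lemma continuous_torN {d : ℕ} {L : ℝ} : Continuous (torN : Tor d L → ℝ) := by
  unfold torN; fun_prop

lemma measurable_torN {d : ℕ} {L : ℝ} [Fact (0 < L)] : Measurable (torN : Tor d L → ℝ) := by
  unfold torN; fun_prop

lemma eN_eq {d : ℕ} (x : Fin d → ℝ) : eN x = Real.sqrt (∑ i, |x i| ^ 2) := by
  simp [eN, EuclideanSpace.norm_eq]

lemma torN_torQ_le {d : ℕ} {L : ℝ} (x : Fin d → ℝ) : torN (torQ d L x) ≤ eN x := by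
  rw [eN_eq, torN]
  refine Real.sqrt_le_sqrt (Finset.sum_le_sum fun i _ => ?_)
  have := QuotientAddGroup.norm_mk_le_norm (S := AddSubgroup.zmultiples L) (m := x i)
  have h2 : ‖torQ d L x i‖ ≤ |x i| := this
  gcongr

lemma torN_torQ_eq {d : ℕ} {L : ℝ} (hL : 0 < L) (x : Fin d → ℝ) (hx : ∀ i, |x i| ≤ L / 2) :
    torN (torQ d L x) = eN x := by
  rw [eN_eq, torN]
  congr 1
  refine Finset.sum_congr rfl fun i _ => ?_
  have : ‖torQ d L x i‖ = |x i| := by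
    unfold torQ
    rw [AddCircle.norm_coe_eq_abs_iff _ hL.ne', abs_of_pos hL]; exact hx i
  rw [this]

lemma abs_le_eN {d : ℕ} (x : Fin d → ℝ) (i : Fin d) : |x i| ≤ eN x := by
  have := PiLp.norm_apply_le (WithLp.toLp 2 x : EuclideanSpace ℝ (Fin d)) i
  simpa [eN] using this

lemma torQ_sub {d : ℕ} {L : ℝ} (x y : Fin d → ℝ) :
    torQ d L (x - y) = torQ d L x - torQ d L y := rfl

def cube (d : ℕ) (L : ℝ) : Set (Fin d → ℝ) :=
  Set.univ.pi fun _ => Set.Ioc (-(L / 2)) (-(L / 2) + L)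

lemma torQ_mp_cube (d : ℕ) (L : ℝ) [Fact (0 < L)] :
    MeasurePreserving (torQ d L) (volume.restrict (cube d L)) volume := by
  rw [volume_pi, cube, Measure.restrict_pi_pi]
  exact measurePreserving_pi _ _ fun i => AddCircle.measurePreserving_mk L (-(L/2))

lemma torQ_mp_box (d : ℕ) (L : ℝ) [Fact (0 < L)] :
    MeasurePreserving (torQ d L) (volume.restrict (box d L)) volume := by
  rw [volume_pi, box, Measure.restrict_pi_pi]
  refine measurePreserving_pi _ _ fun i => ?_
  have := AddCircle.measurePreserving_mk L 0
  rw [zero_add] at this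
  rwa [restrict_Ico_eq_restrict_Ioc]

lemma mem_cube_of {d : ℕ} {L r : ℝ} (hr : r < L / 2) (x : Fin d → ℝ) (hx : eN x ≤ r) :
    x ∈ cube d L := by
  intro i _
  have := abs_le.1 ((abs_le_eN x i).trans hx)
  constructor <;> linarith

lemma abs_of_mem_cube {d : ℕ} {L : ℝ} (x : Fin d → ℝ) (hx : x ∈ cube d L) (i : Fin d) :
    |x i| ≤ L / 2 := by
  have := hx i (mem_univ i)
  rw [abs_le]
  constructor <;> linarith [this.1, this.2]

lemma cube_iff {d : ℕ} {L r : ℝ} (hL : 0 < L) (hr : r < L / 2) (x : Fin d → ℝ) :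
    (torN (torQ d L x) ≤ r ∧ x ∈ cube d L) ↔ eN x ≤ r := by
  constructor
  · rintro ⟨h, hx⟩
    rwa [← torN_torQ_eq hL x (abs_of_mem_cube x hx)]
  · intro h
    exact ⟨(torN_torQ_le x).trans h, mem_cube_of hr x h⟩

lemma measurable_eN {d : ℕ} : Measurable (eN : (Fin d → ℝ) → ℝ) := by
  have : (eN : (Fin d → ℝ) → ℝ) = fun x => Real.sqrt (∑ i, |x i| ^ 2) := funext eN_eq
  rw [this]
  have h : Continuous fun x : Fin d → ℝ => Real.sqrt (∑ i, |x i| ^ 2) := by fun_prop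
  exact h.measurable

lemma vol_ball {d : ℕ} {L r : ℝ} [hL : Fact (0 < L)] (hr : r < L / 2) :
    volume {w : Tor d L | torN w ≤ r} =
      volume (closedBall (0 : EuclideanSpace ℝ (Fin d)) r) := by
  have hm : MeasurableSet {w : Tor d L | torN w ≤ r} :=
    measurableSet_le measurable_torN measurable_const
  rw [← (torQ_mp_cube d L).measure_preimage hm.nullMeasurableSet,
    Measure.restrict_apply ((torQ_mp_cube d L).measurable hm),
    ← (PiLp.volume_preserving_toLp (Fin d)).measure_preimage
      measurableSet_closedBall.nullMeasurableSet]
  congr 1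
  ext x
  simp only [mem_inter_iff, mem_preimage, mem_ofPred_eq, mem_closedBall, dist_zero_right]
  exact cube_iff hL.out hr x

lemma eN_add_le {d : ℕ} (x y : Fin d → ℝ) : eN (x + y) ≤ eN x + eN y := by
  simp only [eN, WithLp.toLp_add]; exact norm_add_le _ _

lemma eN_neg {d : ℕ} (x : Fin d → ℝ) : eN (-x) = eN x := by
  simp [eN]

lemma vol_pair {d : ℕ} {L r : ℝ} [hL : Fact (0 < L)] (hr0 : 0 < r) (hr : 10 * r < L)
    (z : Fin d → ℝ) (hz : eN z ≤ 2 * r) :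
    volume {w : Tor d L | torN w ≤ r ∨ torN (w - torQ d L z) ≤ r} =
      volume (closedBall (0 : EuclideanSpace ℝ (Fin d)) r ∪ closedBall (WithLp.toLp 2 z) r) := by
  have hm : MeasurableSet {w : Tor d L | torN w ≤ r ∨ torN (w - torQ d L z) ≤ r} := by
    refine MeasurableSet.union (measurableSet_le measurable_torN measurable_const) ?_
    exact measurableSet_le (measurable_torN.comp (measurable_id.sub_const _)) measurable_const
  rw [← (torQ_mp_cube d L).measure_preimage hm.nullMeasurableSet,
    Measure.restrict_apply ((torQ_mp_cube d L).measurable hm),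
    ← (PiLp.volume_preserving_toLp (Fin d)).measure_preimage
      (measurableSet_closedBall.union measurableSet_closedBall).nullMeasurableSet]
  congr 1
  ext x
  simp only [mem_inter_iff, mem_preimage, mem_ofPred_eq, mem_closedBall, dist_zero_right,
    mem_union, dist_eq_norm, sub_zero, ← WithLp.toLp_sub, ← torQ_sub]
  change _ ↔ eN x ≤ r ∨ eN (x - z) ≤ r
  rw [or_and_right, cube_iff hL.out (by linarith)]
  refine or_congr Iff.rfl ?_
  constructor
  · rintro ⟨h, hx⟩
    have h3 : torN (torQ d L x) ≤ 3 * r := by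
      have h1 := torN_add_le (torQ d L (x - z)) (torQ d L z)
      have h2 : torQ d L (x - z) + torQ d L z = torQ d L x := by rw [torQ_sub]; abel
      rw [h2] at h1
      have := torN_torQ_le (L := L) z
      linarith
    have h4 := (cube_iff hL.out (by linarith : 3 * r < L / 2) x).1 ⟨h3, hx⟩
    have h5 : eN (x - z) ≤ 5 * r := by
      have := eN_add_le x (-z)
      rw [eN_neg, ← sub_eq_add_neg] at this
      linarith
    rwa [← torN_torQ_eq hL.out]
    intro i
    have := abs_le_eN (x - z) i
    linarith
  · intro h
    refine ⟨(torN_torQ_le _).trans h, mem_cube_of (by linarith : 3 * r < L / 2) x ?_⟩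
    have := eN_add_le (x - z) z
    rw [sub_add_cancel] at this
    linarith

lemma norm_unitVec {d : ℕ} (hd : 1 ≤ d) : ‖unitVec d‖ = 1 := by
  unfold unitVec
  rw [dif_pos (by omega)]
  simp

lemma vol_union_ne_top {d : ℕ} (a b : EuclideanSpace ℝ (Fin d)) (r : ℝ) :
    volume (closedBall a r ∪ closedBall b r) ≠ ⊤ :=
  ((measure_union_le _ _).trans_lt
    (ENNReal.add_lt_top.2 ⟨measure_closedBall_lt_top, measure_closedBall_lt_top⟩)).ne

open scoped Pointwise in
lemma vol_union {d : ℕ} (hd : 1 ≤ d) {r : ℝ} (hr : 0 < r) (z : EuclideanSpace ℝ (Fin d)) :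
    volume (closedBall 0 r ∪ closedBall z r) =
      ENNReal.ofReal (r ^ d * omegaVol d (‖z‖ / r)) := by
  set t := ‖z‖ / r with ht
  have ht0 : 0 ≤ t := by positivity
  set R := (ℝ ∙ (t • unitVec d - r⁻¹ • z))ᗮ.reflection with hR
  have hRz : R (t • unitVec d) = r⁻¹ • z := by
    apply Submodule.reflection_sub
    rw [norm_smul, norm_smul, norm_unitVec hd, Real.norm_of_nonneg ht0, norm_inv,
      Real.norm_of_nonneg hr.le, ht]
    field_simp
  have hset : closedBall 0 r ∪ closedBall z r = r • (closedBall 0 1 ∪ closedBall (r⁻¹ • z) 1) := by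
    rw [smul_set_union, _root_.smul_closedBall _ _ zero_le_one, _root_.smul_closedBall _ _ zero_le_one,
      smul_zero, smul_inv_smul₀ hr.ne', Real.norm_of_nonneg hr.le, mul_one]
  rw [hset, Measure.addHaar_smul, finrank_euclideanSpace_fin, abs_of_nonneg (by positivity),
    ENNReal.ofReal_mul (by positivity)]
  congr 1
  rw [omegaVol, ENNReal.ofReal_toReal (vol_union_ne_top _ _ _),
    ← R.measurePreserving.measure_preimage
      (measurableSet_closedBall.union measurableSet_closedBall).nullMeasurableSet,
      preimage_union, R.preimage_closedBall, R.preimage_closedBall, ← hRz, R.symm_apply_apply,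
      map_zero]

lemma vol_closedBall {d : ℕ} {r : ℝ} (hr : 0 ≤ r) :
    volume (closedBall (0 : EuclideanSpace ℝ (Fin d)) r) = ENNReal.ofReal (phi d r) := by
  rw [Measure.addHaar_closedBall' _ _ hr, phi, unitBallVol, mul_comm, ENNReal.ofReal_mul (by simp),
    ENNReal.ofReal_toReal measure_closedBall_lt_top.ne, finrank_euclideanSpace_fin]

section piaux
variable {X : Type*} [MeasurableSpace X] (μ : Measure X) [IsProbabilityMeasure μ]

lemma pi_split {m : ℕ} (i : Fin (m + 1)) {E : Set (Fin (m + 1) → X)} (hE : MeasurableSet E) :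
    Measure.pi (fun _ : Fin (m + 1) => μ) E =
      ∫⁻ x, Measure.pi (fun _ : Fin m => μ) {ω | i.insertNth x ω ∈ E} ∂μ := by
  have h := (measurePreserving_piFinSuccAbove (fun _ : Fin (m + 1) => μ) i).symm
  rw [← h.measure_preimage hE.nullMeasurableSet, Measure.prod_apply (h.measurable hE)]
  rfl

lemma pi_single {m : ℕ} (i : Fin (m + 1)) {T : Set X} (hT : MeasurableSet T) {G : X → Set X}
    (hG : MeasurableSet {p : X × X | p.2 ∈ G p.1}) :
    Measure.pi (fun _ : Fin (m + 1) => μ) {ω | ω i ∈ T ∧ ∀ k, k ≠ i → ω k ∈ G (ω i)} =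
      ∫⁻ x, (if x ∈ T then μ (G x) ^ m else 0) ∂μ := by
  have hE : MeasurableSet {ω : Fin (m + 1) → X | ω i ∈ T ∧ ∀ k, k ≠ i → ω k ∈ G (ω i)} := by
    have : {ω : Fin (m + 1) → X | ω i ∈ T ∧ ∀ k, k ≠ i → ω k ∈ G (ω i)} =
        {ω | ω i ∈ T} ∩ ⋂ k, ⋂ (_ : k ≠ i), {ω | ω k ∈ G (ω i)} := by ext; simp
    rw [this]
    refine MeasurableSet.inter (measurable_pi_apply i hT) ?_
    refine MeasurableSet.iInter fun k => MeasurableSet.iInter fun _ => ?_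
    have hm : Measurable fun ω : Fin (m + 1) → X => (ω i, ω k) := by fun_prop
    exact hm hG
  rw [pi_split μ i hE]
  refine lintegral_congr fun x => ?_
  have : {ω : Fin m → X | i.insertNth (α := fun _ => X) x ω ∈
      {ω : Fin (m + 1) → X | ω i ∈ T ∧ ∀ k, k ≠ i → ω k ∈ G (ω i)}} =
      {ω | x ∈ T ∧ ∀ k, ω k ∈ G x} := by
    ext ω
    simp only [mem_ofPred_eq, Fin.insertNth_apply_same, Fin.forall_iff_succAbove i,
      Fin.insertNth_apply_succAbove, ne_eq, not_true_eq_false, false_imp_iff, true_and,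
      Fin.succAbove_ne, not_false_eq_true, true_imp_iff]
  rw [this]
  by_cases hx : x ∈ T
  · have h2 : {ω : Fin m → X | x ∈ T ∧ ∀ k, ω k ∈ G x} = univ.pi fun _ => G x := by
      ext ω; simp [hx]
    rw [h2, Measure.pi_pi]; simp [hx]
  · simp [hx]

lemma pi_double {m : ℕ} (i j : Fin (m + 2)) (hij : i ≠ j) {T : Set (X × X)}
    (hT : MeasurableSet T) {G : X → X → Set X}
    (hG : MeasurableSet {p : (X × X) × X | p.2 ∈ G p.1.1 p.1.2}) :
    Measure.pi (fun _ : Fin (m + 2) => μ)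
      {ω | (ω i, ω j) ∈ T ∧ ∀ k, k ≠ i → k ≠ j → ω k ∈ G (ω i) (ω j)} =
      ∫⁻ x, ∫⁻ y, (if (x, y) ∈ T then μ (G x y) ^ m else 0) ∂μ ∂μ := by
  have hE : MeasurableSet {ω : Fin (m + 2) → X |
      (ω i, ω j) ∈ T ∧ ∀ k, k ≠ i → k ≠ j → ω k ∈ G (ω i) (ω j)} := by
    have : {ω : Fin (m + 2) → X |
        (ω i, ω j) ∈ T ∧ ∀ k, k ≠ i → k ≠ j → ω k ∈ G (ω i) (ω j)} =
        {ω | (ω i, ω j) ∈ T} ∩ ⋂ k, ⋂ (_ : k ≠ i), ⋂ (_ : k ≠ j), {ω | ω k ∈ G (ω i) (ω j)} := by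
      ext; simp
    rw [this]
    refine MeasurableSet.inter
      (((measurable_pi_apply i).prodMk (measurable_pi_apply j)) hT) ?_
    refine MeasurableSet.iInter fun k => MeasurableSet.iInter fun _ =>
      MeasurableSet.iInter fun _ => ?_
    have hm : Measurable fun ω : Fin (m + 2) → X => ((ω i, ω j), ω k) := by fun_prop
    exact hm hG
  rw [pi_split μ i hE]
  refine lintegral_congr fun x => ?_
  obtain ⟨j', rfl⟩ := Fin.exists_succAbove_eq hij.symm
  have : {ω : Fin (m + 1) → X | i.insertNth (α := fun _ => X) x ω ∈
      {ω : Fin (m + 2) → X | (ω i, ω (i.succAbove j')) ∈ T ∧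
        ∀ k, k ≠ i → k ≠ i.succAbove j' → ω k ∈ G (ω i) (ω (i.succAbove j'))}} =
      {ω | ω j' ∈ {y | (x, y) ∈ T} ∧ ∀ k, k ≠ j' → ω k ∈ G x (ω j')} := by
    ext ω
    simp only [mem_ofPred_eq, Fin.insertNth_apply_same, Fin.forall_iff_succAbove i,
      Fin.insertNth_apply_succAbove, ne_eq, not_true_eq_false, false_imp_iff, true_and,
      Fin.succAbove_ne, not_false_eq_true, true_imp_iff, Fin.succAbove_right_inj]
  rw [this, pi_single μ j' (T := {y | (x, y) ∈ T}) (measurable_prodMk_left hT) (G := fun y => G x y)]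
  · rfl
  · have : Measurable fun p : X × X => ((x, p.1), p.2) := by fun_prop
    exact this hG

end piaux

def nuT (d : ℕ) (L : ℝ) [Fact (0 < L)] : Measure (Tor d L) :=
  ((L.toNNReal ^ d)⁻¹ : ℝ≥0) • volume

lemma mpQ (d : ℕ) (L : ℝ) [Fact (0 < L)] :
    MeasurePreserving (torQ d L) (uniformBox d L) (nuT d L) := by
  have := (torQ_mp_box d L).smul_measure (((L.toNNReal ^ d)⁻¹ : ℝ≥0) : ℝ≥0∞)
  exact this

instance nuT_prob (d : ℕ) (L : ℝ) [hL : Fact (0 < L)] : IsProbabilityMeasure (nuT d L) := by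
  constructor
  have h : L.toNNReal ≠ 0 := by simpa using hL.out
  have h2 : (volume (univ : Set (Tor d L))) = ((L.toNNReal ^ d : ℝ≥0) : ℝ≥0∞) := by
    rw [volume_pi, Measure.pi_univ]
    simp [AddCircle.measure_univ, ENNReal.ofReal]
  rw [nuT, Measure.smul_apply, h2, ENNReal.smul_def, smul_eq_mul, ← ENNReal.coe_mul,
    inv_mul_cancel₀ (pow_ne_zero _ h), ENNReal.coe_one]

instance uniformBox_prob (d : ℕ) (L : ℝ) [hL : Fact (0 < L)] :
    IsProbabilityMeasure (uniformBox d L) := by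
  constructor
  rw [← preimage_univ (f := torQ d L), (mpQ d L).measure_preimage MeasurableSet.univ.nullMeasurableSet,
    measure_univ]

instance nuT_inv (d : ℕ) (L : ℝ) [hL : Fact (0 < L)] : (nuT d L).IsAddRightInvariant := by
  unfold nuT
  infer_instance

def isoA (d : ℕ) (L ρ : ℝ) (x : Fin d → ℝ) : Set (Fin d → ℝ) := {y | y ∈ torBall L x ρ → y = x}

lemma iso_iff {d n : ℕ} {ρ : ℝ} (hρ : 0 < ρ) (ω : Fin n → Fin d → ℝ) (i : Fin n) :
    Set.range ω ∩ torBall (sideLen d n) (ω i) ρ = {ω i} ↔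
      ω i ∈ box d (sideLen d n) ∧ ∀ k, k ≠ i → ω k ∈ isoA d (sideLen d n) ρ (ω i) := by
  constructor
  · intro h
    constructor
    · have : ω i ∈ Set.range ω ∩ torBall (sideLen d n) (ω i) ρ := by rw [h]; rfl
      exact this.2.1
    · intro k _ hk
      have : ω k ∈ Set.range ω ∩ torBall (sideLen d n) (ω i) ρ := ⟨⟨k, rfl⟩, hk⟩
      rw [h] at this
      exact this
  · rintro ⟨h1, h2⟩
    ext y
    constructor
    · rintro ⟨⟨k, rfl⟩, hk⟩
      by_cases hki : k = i
      · rw [hki]; rfl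
      · exact h2 k hki hk
    · intro hy
      rw [mem_singleton_iff] at hy
      subst hy
      refine ⟨⟨i, rfl⟩, h1, ?_⟩
      rw [torDist_eq, sub_self, torN_zero]; exact hρ.le

lemma measurable_torQ {d : ℕ} {L : ℝ} [Fact (0 < L)] : Measurable (torQ d L) :=
  (mpQ d L).measurable

lemma measurable_box {d : ℕ} {L : ℝ} : MeasurableSet (box d L) :=
  MeasurableSet.univ_pi fun _ => measurableSet_Ico

lemma measurable_isoA {d : ℕ} {L ρ : ℝ} [Fact (0 < L)] :
    MeasurableSet {p : (Fin d → ℝ) × (Fin d → ℝ) | p.2 ∈ isoA d L ρ p.1} := by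
  have : {p : (Fin d → ℝ) × (Fin d → ℝ) | p.2 ∈ isoA d L ρ p.1} =
      ({p | p.2 ∈ box d L} ∩ {p | torN (torQ d L p.1 - torQ d L p.2) ≤ ρ})ᶜ ∪ {p | p.2 = p.1} := by
    ext p
    simp only [isoA, torBall, torDist_eq, mem_ofPred_eq, mem_union, mem_compl_iff, mem_inter_iff]
    tauto
  rw [this]
  refine MeasurableSet.union (MeasurableSet.compl (MeasurableSet.inter ?_ ?_)) ?_
  · exact measurable_snd measurable_box
  · refine measurableSet_le (measurable_torN.comp ?_) measurable_const
    exact (measurable_torQ.comp measurable_fst).sub (measurable_torQ.comp measurable_snd)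
  · exact measurableSet_eq_fun measurable_snd measurable_fst

lemma ae_mem_box {d : ℕ} {L : ℝ} : ∀ᵐ x ∂(uniformBox d L), x ∈ box d L := by
  refine Measure.ae_smul_measure (ae_restrict_mem measurable_box) _

lemma ae_ne {d : ℕ} (hd : 1 ≤ d) {L : ℝ} (x : Fin d → ℝ) : ∀ᵐ y ∂(uniformBox d L), y ≠ x := by
  have : Nonempty (Fin d) := ⟨⟨0, hd⟩⟩
  refine Measure.ae_smul_measure (ae_restrict_of_ae ?_) _
  exact Measure.ae_ne volume x

lemma ae_isoA {d : ℕ} (hd : 1 ≤ d) {L ρ : ℝ} [Fact (0 < L)] (x : Fin d → ℝ) :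
    ∀ᵐ y ∂(uniformBox d L), y ∈ isoA d L ρ x ↔ ρ < torN (torQ d L y - torQ d L x) := by
  filter_upwards [ae_mem_box, ae_ne hd x] with y hy hne
  simp only [isoA, torBall, torDist_eq, mem_ofPred_eq, hy, hne, true_and, imp_false, not_le]
  rw [torN_sub_comm]

lemma mu_isoA {d : ℕ} (hd : 1 ≤ d) {L ρ : ℝ} [Fact (0 < L)] (x : Fin d → ℝ) :
    uniformBox d L (isoA d L ρ x) = nuT d L {w | ρ < torN w} := by
  have hm : MeasurableSet {w : Tor d L | ρ < torN w} :=
    measurableSet_lt measurable_const measurable_torN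
  have h : MeasurePreserving (fun w => w - torQ d L x) (nuT d L) (nuT d L) :=
    measurePreserving_sub_right _ _
  rw [← h.measure_preimage hm.nullMeasurableSet,
    ← (mpQ d L).measure_preimage (h.measurable hm).nullMeasurableSet]
  refine measure_congr ?_
  filter_upwards [ae_isoA hd (ρ := ρ) x] with y hy
  exact propext hy

def HH (d : ℕ) (L ρ : ℝ) [Fact (0 < L)] (u : Tor d L) : ℝ≥0∞ :=
  nuT d L {w | ρ < torN w ∧ ρ < torN (w - u)}

lemma meas_pairset {d : ℕ} {L ρ : ℝ} [Fact (0 < L)] :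
    MeasurableSet {p : Tor d L × Tor d L | ρ < torN p.2 ∧ ρ < torN (p.2 - p.1)} := by
  refine MeasurableSet.inter (s₁ := {p : Tor d L × Tor d L | ρ < torN p.2})
    (s₂ := {p : Tor d L × Tor d L | ρ < torN (p.2 - p.1)}) ?_ ?_
  · exact measurableSet_lt measurable_const (measurable_torN.comp measurable_snd)
  · exact measurableSet_lt measurable_const
      (measurable_torN.comp (measurable_snd.sub measurable_fst))

lemma measurable_HH {d : ℕ} {L ρ : ℝ} [Fact (0 < L)] : Measurable (HH d L ρ) :=
  measurable_measure_prodMk_left meas_pairset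

lemma mu_isoA2 {d : ℕ} (hd : 1 ≤ d) {L ρ : ℝ} [Fact (0 < L)] (x y : Fin d → ℝ) :
    uniformBox d L (isoA d L ρ x ∩ isoA d L ρ y) = HH d L ρ (torQ d L y - torQ d L x) := by
  have hm : MeasurableSet {w : Tor d L | ρ < torN w ∧
      ρ < torN (w - (torQ d L y - torQ d L x))} :=
    measurable_prodMk_left (x := (torQ d L y - torQ d L x)) meas_pairset
  have h : MeasurePreserving (fun w => w - torQ d L x) (nuT d L) (nuT d L) :=
    measurePreserving_sub_right _ _
  rw [HH, ← h.measure_preimage hm.nullMeasurableSet,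
    ← (mpQ d L).measure_preimage (h.measurable hm).nullMeasurableSet]
  refine measure_congr ?_
  filter_upwards [ae_isoA hd (ρ := ρ) x, ae_isoA hd (ρ := ρ) y] with z hz hz'
  refine propext ?_
  change z ∈ isoA d L ρ x ∧ z ∈ isoA d L ρ y ↔ ρ < torN (torQ d L z - torQ d L x) ∧
    ρ < torN (torQ d L z - torQ d L x - (torQ d L y - torQ d L x))
  rw [sub_sub_sub_cancel_right, hz, hz']

def isoE (d n : ℕ) (ρ : ℝ) (i : Fin n) : Set (Fin n → Fin d → ℝ) :=
  {ω | ω i ∈ box d (sideLen d n) ∧ ∀ k, k ≠ i → ω k ∈ isoA d (sideLen d n) ρ (ω i)}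

lemma prob_single {d m : ℕ} (hd : 1 ≤ d) {L ρ : ℝ} [Fact (0 < L)] (hL : sideLen d (m + 1) = L)
    (i : Fin (m + 1)) :
    binppLaw d (m + 1) (isoE d (m + 1) ρ i) = nuT d L {w | ρ < torN w} ^ m := by
  rw [binppLaw, isoE, hL]
  rw [pi_single (uniformBox d L) i measurable_box measurable_isoA]
  have : ∀ᵐ x ∂(uniformBox d L), (if x ∈ box d L then uniformBox d L (isoA d L ρ x) ^ m else 0) =
      nuT d L {w | ρ < torN w} ^ m := by
    filter_upwards [ae_mem_box] with x hx
    rw [if_pos hx, mu_isoA hd]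
  rw [lintegral_congr_ae this, lintegral_const, measure_univ, mul_one]

lemma prob_double {d m : ℕ} (hd : 1 ≤ d) {L ρ : ℝ} [Fact (0 < L)] (hL : sideLen d (m + 2) = L)
    (i j : Fin (m + 2)) (hij : i ≠ j) :
    binppLaw d (m + 2) (isoE d (m + 2) ρ i ∩ isoE d (m + 2) ρ j) =
      ∫⁻ w, (if ρ < torN w then HH d L ρ w ^ m else 0) ∂(nuT d L) := by
  set T : Set ((Fin d → ℝ) × (Fin d → ℝ)) := {p | (p.1 ∈ box d L ∧ p.2 ∈ isoA d L ρ p.1) ∧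
    (p.2 ∈ box d L ∧ p.1 ∈ isoA d L ρ p.2)} with hT
  have hTm : MeasurableSet T := by
    refine MeasurableSet.inter (s₁ := {p : (Fin d → ℝ) × (Fin d → ℝ) | p.1 ∈ box d L ∧ p.2 ∈ isoA d L ρ p.1})
      (s₂ := {p : (Fin d → ℝ) × (Fin d → ℝ) | p.2 ∈ box d L ∧ p.1 ∈ isoA d L ρ p.2}) ?_ ?_
    · exact MeasurableSet.inter (s₁ := {p : (Fin d → ℝ) × (Fin d → ℝ) | p.1 ∈ box d L})
        (measurable_fst measurable_box) measurable_isoA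
    · exact MeasurableSet.inter (s₁ := {p : (Fin d → ℝ) × (Fin d → ℝ) | p.2 ∈ box d L})
        (measurable_snd measurable_box) (measurable_swap measurable_isoA)
  have hG : MeasurableSet {p : ((Fin d → ℝ) × (Fin d → ℝ)) × (Fin d → ℝ) |
      p.2 ∈ isoA d L ρ p.1.1 ∩ isoA d L ρ p.1.2} := by
    have h1 : Measurable fun p : ((Fin d → ℝ) × (Fin d → ℝ)) × (Fin d → ℝ) => (p.1.1, p.2) := by
      fun_prop
    have h2 : Measurable fun p : ((Fin d → ℝ) × (Fin d → ℝ)) × (Fin d → ℝ) => (p.1.2, p.2) := by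
      fun_prop
    exact (h1 measurable_isoA).inter (h2 measurable_isoA)
  have hset : isoE d (m + 2) ρ i ∩ isoE d (m + 2) ρ j =
      {ω | (ω i, ω j) ∈ T ∧ ∀ k, k ≠ i → k ≠ j → ω k ∈ isoA d L ρ (ω i) ∩ isoA d L ρ (ω j)} := by
    ext ω
    simp only [isoE, hL, hT, mem_inter_iff, mem_ofPred_eq]
    constructor
    · rintro ⟨⟨h1, h2⟩, h3, h4⟩
      exact ⟨⟨⟨h1, h2 j hij.symm⟩, h3, h4 i hij⟩, fun k hk hk' => ⟨h2 k hk, h4 k hk'⟩⟩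
    · rintro ⟨⟨⟨h1, h2⟩, h3, h4⟩, h5⟩
      refine ⟨⟨h1, fun k hk => ?_⟩, h3, fun k hk => ?_⟩
      · by_cases hkj : k = j
        · rw [hkj]; exact h2
        · exact (h5 k hk hkj).1
      · by_cases hki : k = i
        · rw [hki]; exact h4
        · exact (h5 k hki hk).2
  rw [hset, binppLaw, hL, pi_double (uniformBox d L) i j hij hTm
    (G := fun x y => isoA d L ρ x ∩ isoA d L ρ y) hG]
  set k : Tor d L → ℝ≥0∞ := fun w => if ρ < torN w then HH d L ρ w ^ m else 0 with hk
  have hkm : Measurable k := by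
    refine Measurable.ite (measurableSet_lt measurable_const measurable_torN) ?_ measurable_const
    exact measurable_HH.pow_const m
  have hin : ∀ᵐ x ∂(uniformBox d L), (∫⁻ y, (if (x, y) ∈ T then
      uniformBox d L (isoA d L ρ x ∩ isoA d L ρ y) ^ m else 0) ∂(uniformBox d L)) =
      ∫⁻ w, k w ∂(nuT d L) := by
    filter_upwards [ae_mem_box] with x hx
    have h : MeasurePreserving (fun w => w - torQ d L x) (nuT d L) (nuT d L) :=
      measurePreserving_sub_right _ _
    rw [← h.lintegral_comp hkm, ← (mpQ d L).lintegral_comp (f := fun a => k (a - torQ d L x))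
      (hkm.comp h.measurable)]
    refine lintegral_congr_ae ?_
    filter_upwards [ae_mem_box, ae_isoA hd (ρ := ρ) x, ae_ne hd x] with y hy hyx hne
    have hxy : x ∈ isoA d L ρ y ↔ y ∈ isoA d L ρ x := by
      rw [hyx]
      simp only [isoA, torBall, torDist_eq, mem_ofPred_eq, hx, hne.symm, true_and, imp_false, not_le]
    have : (x, y) ∈ T ↔ ρ < torN (torQ d L y - torQ d L x) := by
      simp only [hT, mem_ofPred_eq, hx, hy, hxy, true_and, and_self, hyx]
    simp only [this, hk, mu_isoA2 hd]
  refine (lintegral_congr_ae (g := fun _ => ∫⁻ w, k w ∂(nuT d L)) ?_).trans ?_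
  · filter_upwards [hin] with x hx
    convert hx
  · rw [lintegral_const, measure_univ, mul_one]

lemma measurable_isoE {d m : ℕ} {L ρ : ℝ} [Fact (0 < L)] (hL : sideLen d m = L) (i : Fin m) :
    MeasurableSet (isoE d m ρ i) := by
  have : isoE d m ρ i = {ω | ω i ∈ box d L} ∩
      ⋂ k, ⋂ (_ : k ≠ i), {ω | ω k ∈ isoA d L ρ (ω i)} := by
    ext; simp [isoE, hL]
  rw [this]
  refine MeasurableSet.inter (measurable_pi_apply i measurable_box) ?_
  refine MeasurableSet.iInter fun k => MeasurableSet.iInter fun _ => ?_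
  have hm : Measurable fun ω : Fin m → (Fin d → ℝ) => (ω i, ω k) := by fun_prop
  exact hm measurable_isoA

lemma nuT_real {d : ℕ} {L : ℝ} [hL : Fact (0 < L)] (s : Set (Tor d L)) :
    (nuT d L).real s = (L ^ d)⁻¹ * volume.real s := by
  rw [nuT, measureReal_nnreal_smul_apply]
  simp [Real.coe_toNNReal _ hL.out.le]

lemma vol_ball_real {d : ℕ} {L r : ℝ} [hL : Fact (0 < L)] (hr0 : 0 ≤ r) (hr : r < L / 2) :
    volume.real {w : Tor d L | torN w ≤ r} = phi d r := by
  rw [Measure.real, vol_ball hr, vol_closedBall hr0, ENNReal.toReal_ofReal]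
  unfold phi unitBallVol; positivity

lemma phi_pos_s4 {d : ℕ} {r : ℝ} (hr : 0 < r) : 0 < phi d r := by
  unfold phi unitBallVol
  have : 0 < (volume (closedBall (0 : EuclideanSpace ℝ (Fin d)) 1)).toReal :=
    ENNReal.toReal_pos (measure_closedBall_pos _ _ one_pos).ne' measure_closedBall_lt_top.ne
  positivity

lemma phi_two {d : ℕ} {r : ℝ} : phi d (2 * r) = 2 ^ d * phi d r := by
  unfold phi; rw [mul_pow]; ring

lemma meas_le {d : ℕ} {L r : ℝ} [hL : Fact (0 < L)] : MeasurableSet {w : Tor d L | torN w ≤ r} :=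
  measurableSet_le measurable_torN measurable_const

lemma single_real {d : ℕ} {L ρ : ℝ} [hL : Fact (0 < L)] (hρ : 0 < ρ) (hr : 10 * ρ < L) :
    (nuT d L {w | ρ < torN w}).toReal = 1 - phi d ρ / L ^ d := by
  have : {w : Tor d L | ρ < torN w} = {w | torN w ≤ ρ}ᶜ := by ext; simp
  rw [this]
  change (nuT d L).real _ = _
  rw [probReal_compl_eq_one_sub meas_le, nuT_real, vol_ball_real hρ.le (by linarith)]
  ring

def VV (d : ℕ) (L ρ : ℝ) [Fact (0 < L)] (u : Tor d L) : ℝ :=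
  volume.real {w : Tor d L | torN w ≤ ρ ∨ torN (w - u) ≤ ρ}

lemma meas_or {d : ℕ} {L r : ℝ} [hL : Fact (0 < L)] (u : Tor d L) :
    MeasurableSet {w : Tor d L | torN w ≤ r ∨ torN (w - u) ≤ r} :=
  MeasurableSet.union meas_le
    (measurableSet_le (measurable_torN.comp (measurable_id.sub_const _)) measurable_const)

lemma HH_real {d : ℕ} {L ρ : ℝ} [hL : Fact (0 < L)] (u : Tor d L) :
    (HH d L ρ u).toReal = 1 - VV d L ρ u / L ^ d := by
  have : {w : Tor d L | ρ < torN w ∧ ρ < torN (w - u)} =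
    {w : Tor d L | torN w ≤ ρ ∨ torN (w - u) ≤ ρ}ᶜ := by ext; simp
  rw [HH, this]
  change (nuT d L).real _ = _
  rw [probReal_compl_eq_one_sub (meas_or u), nuT_real, VV]
  ring

lemma VV_far {d : ℕ} {L ρ : ℝ} [hL : Fact (0 < L)] (hρ : 0 < ρ) (hr : 10 * ρ < L) (u : Tor d L)
    (hu : 2 * ρ < torN u) : VV d L ρ u = 2 * phi d ρ := by
  have h1 : {w : Tor d L | torN w ≤ ρ ∨ torN (w - u) ≤ ρ} =
      {w : Tor d L | torN w ≤ ρ} ∪ (fun w => w - u) ⁻¹' {w : Tor d L | torN w ≤ ρ} := by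
    ext; simp
  have hmp : MeasurePreserving (fun w : Tor d L => w - u) volume volume :=
    measurePreserving_sub_right _ _
  rw [VV, h1, measureReal_union _ (hmp.measurable meas_le), hmp.measureReal_preimage
    meas_le.nullMeasurableSet, vol_ball_real hρ.le (by linarith)]
  · ring
  · rw [Set.disjoint_left]
    intro w hw hw'
    have h2 : torN w ≤ ρ := hw
    have h3 : torN (w - u) ≤ ρ := hw'
    have h4 := torN_add_le w (u - w)
    rw [torN_sub_comm u w, add_sub_cancel] at h4
    linarith

lemma VV_near {d : ℕ} (hd : 1 ≤ d) {L ρ : ℝ} [hL : Fact (0 < L)] (hρ : 0 < ρ) (hr : 10 * ρ < L)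
    (z : Fin d → ℝ) (hz : eN z ≤ 2 * ρ) :
    VV d L ρ (torQ d L z) = ρ ^ d * omegaVol d (eN z / ρ) := by
  rw [VV, Measure.real, vol_pair hρ hr z hz, vol_union hd hρ, ENNReal.toReal_ofReal]
  · rfl
  · unfold omegaVol; positivity

def gE (d : ℕ) (ρ N : ℝ) (m : ℕ) (z : EuclideanSpace ℝ (Fin d)) : ℝ :=
  if ρ < ‖z‖ ∧ ‖z‖ ≤ 2 * ρ then (1 - ρ ^ d * omegaVol d (‖z‖ / ρ) / N) ^ m else 0

lemma pair_real {d m : ℕ} (hd : 1 ≤ d) {L ρ : ℝ} [hL : Fact (0 < L)] (hρ : 0 < ρ)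
    (hr : 10 * ρ < L) :
    (∫⁻ w, (if ρ < torN w then HH d L ρ w ^ m else 0) ∂(nuT d L)).toReal =
      (L ^ d)⁻¹ * ((L ^ d - 2 ^ d * phi d ρ) * (1 - 2 * phi d ρ / L ^ d) ^ m +
        ∫ z, gE d ρ (L ^ d) m z) := by
  set f : Tor d L → ℝ := fun w => if ρ < torN w then (1 - VV d L ρ w / L ^ d) ^ m else 0 with hf
  set k : Tor d L → ℝ≥0∞ := fun w => if ρ < torN w then HH d L ρ w ^ m else 0 with hk
  have hkm : Measurable k := by
    refine Measurable.ite (measurableSet_lt measurable_const measurable_torN) ?_ measurable_const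
    exact measurable_HH.pow_const m
  have hk1 : ∀ w, k w ≤ 1 := by
    intro w
    simp only [hk]
    split_ifs
    · exact pow_le_one₀ (by simp) prob_le_one
    · exact zero_le_one
  have hkf : ∀ w, (k w).toReal = f w := by
    intro w
    simp only [hk, hf]
    split_ifs
    · rw [ENNReal.toReal_pow, HH_real]
    · rfl
  have hfm : Measurable f := by
    rw [← funext hkf]; exact hkm.ennreal_toReal
  have hf1 : ∀ w, ‖f w‖ ≤ 1 := by
    intro w
    rw [← hkf, Real.norm_of_nonneg ENNReal.toReal_nonneg]
    exact ENNReal.toReal_mono ENNReal.one_ne_top (hk1 w)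
  have hfi : Integrable f (volume : Measure (Tor d L)) :=
    Integrable.of_bound hfm.aestronglyMeasurable 1 (Eventually.of_forall hf1)
  rw [← integral_toReal hkm.aemeasurable
    (Eventually.of_forall fun w => (hk1 w).trans_lt ENNReal.one_lt_top)]
  simp only [hkf]
  have h1 : ∫ w, f w ∂(nuT d L) = (L ^ d)⁻¹ * ∫ w, f w := by
    rw [nuT, integral_smul_nnreal_measure, NNReal.smul_def]
    simp [Real.coe_toNNReal _ hL.out.le]
  rw [h1]
  congr 1
  have hS : MeasurableSet {w : Tor d L | torN w ≤ 2 * ρ} := meas_le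
  rw [← integral_add_compl hS hfi, add_comm]
  congr 1
  · have : ∫ w in {w : Tor d L | torN w ≤ 2 * ρ}ᶜ, f w =
        ∫ w in {w : Tor d L | torN w ≤ 2 * ρ}ᶜ, (1 - 2 * phi d ρ / L ^ d) ^ m := by
      refine setIntegral_congr_fun hS.compl fun w hw => ?_
      have hw' : 2 * ρ < torN w := by simpa using hw
      simp only [hf]
      rw [if_pos (by linarith), VV_far hρ hr w hw']
    rw [this, setIntegral_const, smul_eq_mul, measureReal_compl hS,
      vol_ball_real (by linarith) (by linarith), phi_two]
    congr 2
    have h3 : (nuT d L).real univ = 1 := by simp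
    rw [nuT_real] at h3
    have : L ^ d ≠ 0 := pow_ne_zero _ hL.out.ne'
    field_simp at h3
    linarith
  · have hI : AEStronglyMeasurable ({w : Tor d L | torN w ≤ 2 * ρ}.indicator f)
        (Measure.map (torQ d L) (volume.restrict (cube d L))) :=
      (hfm.indicator hS).aestronglyMeasurable
    have hcube : MeasurableSet (cube d L) := MeasurableSet.univ_pi fun _ => measurableSet_Ioc
    rw [← integral_indicator hS, ← (torQ_mp_cube d L).map_eq,
      integral_map measurable_torQ.aemeasurable hI, ← integral_indicator hcube,
      ← (PiLp.volume_preserving_toLp (Fin d)).integral_comp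
        (MeasurableEquiv.toLp 2 _).measurableEmbedding]
    refine integral_congr_ae (Eventually.of_forall fun x => ?_)
    have hc := cube_iff hL.out (by linarith : 2 * ρ < L / 2) x
    simp only [gE]
    change _ = if ρ < eN x ∧ eN x ≤ 2 * ρ then
      (1 - ρ ^ d * omegaVol d (eN x / ρ) / L ^ d) ^ m else 0
    by_cases hx : eN x ≤ 2 * ρ
    · obtain ⟨hx1, hx2⟩ := hc.2 hx
      rw [indicator_of_mem hx2, indicator_of_mem (show torQ d L x ∈ {w | torN w ≤ 2 * ρ} from hx1)]
      simp only [hf]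
      rw [torN_torQ_eq hL.out x (abs_of_mem_cube x hx2), VV_near hd hρ hr x hx]
      simp [hx]
    · rw [if_neg (fun h => hx h.2)]
      by_cases hxc : x ∈ cube d L
      · rw [indicator_of_mem hxc, indicator_of_notMem]
        intro h
        exact hx (hc.1 ⟨h, hxc⟩)
      · rw [indicator_of_notMem hxc]

lemma measurable_omegaVol (d : ℕ) : Measurable (omegaVol d) := by
  have hs : MeasurableSet {p : ℝ × EuclideanSpace ℝ (Fin d) |
      p.2 ∈ closedBall (0 : EuclideanSpace ℝ (Fin d)) 1 ∪ closedBall (p.1 • unitVec d) 1} := by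
    refine MeasurableSet.union (s₁ := {p : ℝ × EuclideanSpace ℝ (Fin d) | dist p.2 0 ≤ 1})
      (s₂ := {p : ℝ × EuclideanSpace ℝ (Fin d) | dist p.2 (p.1 • unitVec d) ≤ 1}) ?_ ?_
    · exact (isClosed_le (by fun_prop) (by fun_prop)).measurableSet
    · exact (isClosed_le (by fun_prop) (by fun_prop)).measurableSet
  exact (measurable_measure_prodMk_left hs).ennreal_toReal

lemma omegaVol_nonneg (d : ℕ) (t : ℝ) : 0 ≤ omegaVol d t := ENNReal.toReal_nonneg

lemma omegaVol_le (d : ℕ) (t : ℝ) : omegaVol d t ≤ 2 * unitBallVol d := by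
  have h := measureReal_union_le (μ := volume) (closedBall (0 : EuclideanSpace ℝ (Fin d)) 1)
    (closedBall (t • unitVec d) 1)
  have h2 : volume.real (closedBall (t • unitVec d) 1) =
      volume.real (closedBall (0 : EuclideanSpace ℝ (Fin d)) 1) := by
    rw [Measure.real, Measure.real, Measure.addHaar_closedBall_center]
  rw [h2] at h
  unfold omegaVol unitBallVol
  change volume.real _ ≤ 2 * volume.real _
  linarith

lemma rho_omega_le (d : ℕ) {ρ : ℝ} (hρ : 0 < ρ) (t : ℝ) :
    ρ ^ d * omegaVol d t ≤ 2 * phi d ρ := by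
  have := mul_le_mul_of_nonneg_left (omegaVol_le d t) (pow_pos hρ d).le
  unfold phi; linarith

lemma tendsto_pow_exp (c : ℝ) :
    Tendsto (fun m : ℕ => (1 - c / ((m : ℝ) + 2)) ^ m) atTop (𝓝 (Real.exp (-c))) := by
  have := Real.tendsto_one_add_pow_exp_of_tendsto (g := fun m : ℕ => -c / ((m : ℝ) + 2)) (t := -c) ?_
  · refine this.congr fun m => ?_
    congr 1; ring
  · have h : Tendsto (fun m : ℕ => -c * ((m : ℝ) / ((m : ℝ) + 2))) atTop (𝓝 (-c * 1)) :=
      (tendsto_natCast_div_add_atTop (2 : ℝ)).const_mul _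
    rw [mul_one] at h
    refine h.congr fun m => ?_
    ring

def gLim (d : ℕ) (ρ : ℝ) (r : ℝ) : ℝ :=
  if ρ < r ∧ r ≤ 2 * ρ then Real.exp (-(ρ ^ d * omegaVol d (r / ρ))) else 0

lemma measurable_gE (d : ℕ) (ρ N : ℝ) (m : ℕ) : Measurable (gE d ρ N m) := by
  unfold gE
  refine Measurable.ite ?_ ?_ measurable_const
  · exact (measurableSet_lt measurable_const measurable_norm).inter
      (measurableSet_le measurable_norm measurable_const)
  · have := (measurable_omegaVol d).comp (measurable_norm (α := EuclideanSpace ℝ (Fin d)) |>.div_const ρ)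
    exact (((this.const_mul _).div_const _).const_sub _).pow_const _

lemma gE_tendsto (d : ℕ) {ρ : ℝ} (hρ : 0 < ρ) :
    Tendsto (fun m : ℕ => ∫ z, gE d ρ ((m : ℝ) + 2) m z) atTop
      (𝓝 (∫ z : EuclideanSpace ℝ (Fin d), gLim d ρ ‖z‖)) := by
  refine tendsto_integral_filter_of_dominated_convergence
    ((closedBall (0 : EuclideanSpace ℝ (Fin d)) (2 * ρ)).indicator fun _ => (1 : ℝ)) ?_ ?_ ?_ ?_
  · exact Eventually.of_forall fun m => (measurable_gE d ρ _ m).aestronglyMeasurable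
  · have : ∀ᶠ m : ℕ in atTop, 2 * phi d ρ ≤ (m : ℝ) :=
      tendsto_natCast_atTop_atTop.eventually_ge_atTop _
    filter_upwards [this] with m hm
    refine Eventually.of_forall fun z => ?_
    unfold gE
    split_ifs with h
    · rw [indicator_of_mem (by simpa using h.2), norm_pow]
      refine pow_le_one₀ (norm_nonneg _) ?_
      have h1 := rho_omega_le d hρ (‖z‖ / ρ)
      have h0 : 0 ≤ ρ ^ d * omegaVol d (‖z‖ / ρ) := by
        have := omegaVol_nonneg d (‖z‖ / ρ); positivity
      have h3 : ρ ^ d * omegaVol d (‖z‖ / ρ) / ((m : ℝ) + 2) ≤ 1 := by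
        rw [div_le_one (by positivity)]; linarith
      have h4 : 0 ≤ ρ ^ d * omegaVol d (‖z‖ / ρ) / ((m : ℝ) + 2) := by positivity
      rw [Real.norm_eq_abs, abs_le]
      constructor <;> linarith
    · rw [norm_zero]
      exact indicator_nonneg (fun _ _ => zero_le_one) _
  · rw [integrable_indicator_iff measurableSet_closedBall]
    exact integrableOn_const measure_closedBall_lt_top.ne
  · refine Eventually.of_forall fun z => ?_
    unfold gE gLim
    split_ifs
    · exact tendsto_pow_exp _
    · exact tendsto_const_nhds

lemma Jintegrand_int (d : ℕ) {ρ : ℝ} (hρ : 0 < ρ) (a b : ℝ) :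
    IntervalIntegrable (fun t => Real.exp (-(ρ ^ d * omegaVol d t)) * t ^ (d - 1)) volume a b := by
  have h : IntervalIntegrable (fun t : ℝ => t ^ (d - 1)) volume a b :=
    (continuous_pow _).intervalIntegrable _ _
  rw [intervalIntegrable_iff] at h ⊢
  refine h.bdd_mul (c := 1) ?_ ?_
  · exact (Real.measurable_exp.comp ((measurable_omegaVol d).const_mul _).neg).aestronglyMeasurable
  · refine Eventually.of_forall fun t => ?_
    rw [Real.norm_of_nonneg (Real.exp_pos _).le, Real.exp_le_one_iff]
    have := omegaVol_nonneg d t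
    have : 0 ≤ ρ ^ d * omegaVol d t := by positivity
    linarith

lemma Jdiff (d : ℕ) {ρ : ℝ} (hρ : 0 < ρ) : Jint 2 d ρ - Jint 1 d ρ =
    d * unitBallVol d * ∫ t in (1:ℝ)..2, Real.exp (-(ρ ^ d * omegaVol d t)) * t ^ (d - 1) := by
  unfold Jint
  rw [← mul_sub, intervalIntegral.integral_interval_sub_left (Jintegrand_int d hρ _ _)
    (Jintegrand_int d hρ _ _)]

lemma gLim_integral {d : ℕ} (hd : 1 ≤ d) {ρ : ℝ} (hρ : 0 < ρ) :
    ∫ z : EuclideanSpace ℝ (Fin d), gLim d ρ ‖z‖ = ρ ^ d * (Jint 2 d ρ - Jint 1 d ρ) := by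
  have : Nonempty (Fin d) := ⟨⟨0, hd⟩⟩
  have hv : volume.real (ball (0 : EuclideanSpace ℝ (Fin d)) 1) = unitBallVol d := by
    rw [unitBallVol, Measure.real, Measure.addHaar_unitClosedBall_eq_addHaar_unitBall]
  rw [integral_fun_norm_addHaar volume (gLim d ρ), finrank_euclideanSpace_fin, hv, Jdiff d hρ]
  have h1 : ∫ y in Ioi (0:ℝ), y ^ (d - 1) • gLim d ρ y =
      ∫ y in ρ..(2 * ρ), Real.exp (-(ρ ^ d * omegaVol d (y / ρ))) * y ^ (d - 1) := by
    rw [intervalIntegral.integral_of_le (by linarith), ← integral_indicator measurableSet_Ioi,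
      ← integral_indicator measurableSet_Ioc]
    congr 1
    ext y
    simp only [indicator, mem_Ioi, mem_Ioc, gLim, smul_eq_mul]
    by_cases h : ρ < y ∧ y ≤ 2 * ρ
    · simp only [h, and_self, if_true, hρ.trans h.1]; ring
    · simp only [if_neg h, mul_zero, ite_self]
  have h2 : ∫ y in ρ..(2 * ρ), Real.exp (-(ρ ^ d * omegaVol d (y / ρ))) * y ^ (d - 1) =
      ρ ^ d * ∫ t in (1:ℝ)..2, Real.exp (-(ρ ^ d * omegaVol d t)) * t ^ (d - 1) := by
    have h3 := intervalIntegral.integral_comp_div (a := ρ) (b := 2 * ρ)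
      (fun t => Real.exp (-(ρ ^ d * omegaVol d t)) * t ^ (d - 1)) hρ.ne'
    rw [div_self hρ.ne', mul_div_cancel_right₀ _ hρ.ne', smul_eq_mul] at h3
    have hpow : ρ ^ d = ρ ^ (d-1) * ρ := by rw [mul_comm, mul_pow_sub_one (by omega)]
    have key : ∀ I : ℝ, ρ ^ d * I = ρ ^ (d-1) * (ρ * I) := fun I => by rw [hpow]; ring
    rw [key, ← h3, ← intervalIntegral.integral_const_mul]
    refine intervalIntegral.integral_congr fun y _ => ?_
    beta_reduce
    rw [div_pow]
    field_simp
  rw [h1, h2, nsmul_eq_mul, smul_eq_mul]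
  ring

lemma J_lower {d : ℕ} (hd : 1 ≤ d) {ρ : ℝ} (hρ : 0 < ρ) :
    (2 ^ d - 1) * phi d ρ * Real.exp (-(2 * phi d ρ)) ≤ ρ ^ d * (Jint 2 d ρ - Jint 1 d ρ) := by
  have h1 : ∫ t in (1:ℝ)..2, Real.exp (-(2 * phi d ρ)) * t ^ (d - 1) ≤
      ∫ t in (1:ℝ)..2, Real.exp (-(ρ ^ d * omegaVol d t)) * t ^ (d - 1) := by
    refine intervalIntegral.integral_mono_on one_le_two ?_ (Jintegrand_int d hρ _ _) ?_
    · exact ((continuous_pow _).const_mul _).intervalIntegrable _ _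
    · intro t ht
      have := rho_omega_le d hρ t
      have ht0 : 0 ≤ t := by linarith [ht.1]
      gcongr
  rw [intervalIntegral.integral_const_mul, integral_pow, Nat.sub_add_cancel hd] at h1
  rw [Jdiff d hρ]
  have hu : 0 ≤ unitBallVol d := ENNReal.toReal_nonneg
  have hd0 : (d : ℝ) ≠ 0 := by positivity
  have hc : ((d - 1 : ℕ) : ℝ) + 1 = d := by exact_mod_cast Nat.sub_add_cancel hd
  rw [hc] at h1
  have h2 := mul_le_mul_of_nonneg_left h1 (by positivity : 0 ≤ ρ ^ d * (d * unitBallVol d))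
  calc _ = ρ ^ d * (d * unitBallVol d) * (Real.exp (-(2 * phi d ρ)) * ((2 ^ d - 1 ^ d) / d)) := by
        rw [one_pow]; unfold phi; field_simp
    _ ≤ _ := h2
    _ = _ := by ring

lemma gS_pos {d : ℕ} (hd : 1 ≤ d) {ρ : ℝ} (hρ : 0 < ρ) : 0 < gS d ρ := by
  have h := J_lower hd hρ
  have hp := phi_pos_s4 (d := d) hρ
  unfold gS
  set p := phi d ρ
  have he : Real.exp (-p) = Real.exp p * Real.exp (-(2 * p)) := by
    rw [← Real.exp_add]; congr 1; ring
  have hE := Real.exp_pos (-(2 * p))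
  have h3 : 1 + p + p ^ 2 / 2 + p ^ 3 / 6 ≤ Real.exp p := by
    have := Real.sum_le_exp_of_nonneg hp.le 4
    simp [Finset.sum_range_succ, Nat.factorial] at this
    linarith
  have h4 : 0 < Real.exp p - (1 - p + p ^ 2) := by
    nlinarith [mul_pos hp hp, mul_nonneg hp.le (sq_nonneg (p - 3/2))]
  have h5 := mul_pos h4 hE
  rw [he]
  nlinarith

lemma pow_bounds {x y : ℝ} (hx : 0 ≤ x) (hxy : x ≤ y) (m : ℕ) :
    ((m : ℝ) + 1) * x ^ m * (y - x) ≤ y ^ (m + 1) - x ^ (m + 1) ∧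
      y ^ (m + 1) - x ^ (m + 1) ≤ ((m : ℝ) + 1) * y ^ m * (y - x) := by
  induction m with
  | zero => simp
  | succ m ih =>
    obtain ⟨h1, h2⟩ := ih
    have hy : 0 ≤ y := hx.trans hxy
    have e : y ^ (m + 1 + 1) - x ^ (m + 1 + 1) =
      y * (y ^ (m + 1) - x ^ (m + 1)) + x ^ (m + 1) * (y - x) := by ring
    have hyx : 0 ≤ y - x := by linarith
    have hp : x ^ (m + 1) ≤ y ^ (m + 1) := pow_le_pow_left₀ hx hxy _
    push_cast
    rw [e]
    constructor
    · have a1 := mul_le_mul_of_nonneg_left h1 hy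
      have a2 : ((m : ℝ) + 1) * x ^ m * (y - x) * x ≤ ((m : ℝ) + 1) * x ^ m * (y - x) * y := by
        gcongr
      have : ((m : ℝ) + 1 + 1) * x ^ (m + 1) * (y - x) =
        ((m : ℝ) + 1) * x ^ m * (y - x) * x + x ^ (m + 1) * (y - x) := by ring
      linarith
    · have a1 := mul_le_mul_of_nonneg_left h2 hy
      have a2 := mul_le_mul_of_nonneg_right hp hyx
      have : ((m : ℝ) + 1 + 1) * y ^ (m + 1) * (y - x) =
        y * (((m : ℝ) + 1) * y ^ m * (y - x)) + y ^ (m + 1) * (y - x) := by ring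
      linarith

lemma diff_tendsto (p : ℝ) (hp : 0 < p) :
    Tendsto (fun m : ℕ => ((m : ℝ) + 2) * (((1 - p / ((m : ℝ) + 2)) ^ 2) ^ (m + 1) -
      (1 - 2 * p / ((m : ℝ) + 2)) ^ (m + 1))) atTop (𝓝 (p ^ 2 * Real.exp (-(2 * p)))) := by
  have hr : Tendsto (fun m : ℕ => ((m : ℝ) + 1) / ((m : ℝ) + 2) * p ^ 2) atTop (𝓝 (p ^ 2)) := by
    have h1 := tendsto_natCast_div_add_atTop (1 : ℝ)
    have h2 := h1.comp (tendsto_add_atTop_nat 1)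
    have h3 := h2.mul_const (p ^ 2)
    rw [one_mul] at h3
    refine h3.congr fun m => ?_
    simp only [Function.comp]
    push_cast
    ring_nf
  have ha := hr.mul (tendsto_pow_exp (2 * p))
  have hb := hr.mul ((tendsto_pow_exp p).pow 2)
  have he : Real.exp (-p) ^ 2 = Real.exp (-(2 * p)) := by
    rw [← Real.exp_nat_mul]; congr 1; push_cast; ring
  rw [he] at hb
  have hev : ∀ᶠ m : ℕ in atTop, 2 * p ≤ (m : ℝ) :=
    tendsto_natCast_atTop_atTop.eventually_ge_atTop _
  refine tendsto_of_tendsto_of_tendsto_of_le_of_le' ha hb ?_ ?_ <;>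
  · filter_upwards [hev] with m hm
    have hN : (0:ℝ) < (m : ℝ) + 2 := by positivity
    have hx : 0 ≤ 1 - 2 * p / ((m : ℝ) + 2) := by
      rw [sub_nonneg, div_le_one hN]; linarith
    have hyx : (1 - p / ((m : ℝ) + 2)) ^ 2 - (1 - 2 * p / ((m : ℝ) + 2)) =
        p ^ 2 / ((m : ℝ) + 2) ^ 2 := by field_simp; ring
    have hxy : 1 - 2 * p / ((m : ℝ) + 2) ≤ (1 - p / ((m : ℝ) + 2)) ^ 2 := by
      rw [← sub_nonneg, hyx]; positivity
    obtain ⟨b1, b2⟩ := pow_bounds hx hxy m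
    rw [hyx] at b1 b2
    first
    | (refine le_trans (le_of_eq ?_) (mul_le_mul_of_nonneg_left b1 hN.le)
       field_simp; done)
    | (refine le_trans (mul_le_mul_of_nonneg_left b2 hN.le) (le_of_eq ?_)
       rw [← pow_mul, ← pow_mul, mul_comm m 2]
       field_simp; done)

lemma sideLen_pow {d : ℕ} (hd : 1 ≤ d) (n : ℕ) : sideLen d n ^ d = (n : ℝ) := by
  rw [sideLen]
  exact Real.rpow_inv_natCast_pow (Nat.cast_nonneg n) (by omega)

lemma var_sum {Ω : Type*} [MeasurableSpace Ω] (P : Measure Ω) [IsProbabilityMeasure P] {n : ℕ}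
    (E : Fin n → Set Ω) (hE : ∀ i, MeasurableSet (E i)) (p q : ℝ)
    (hp : ∀ i, P.real (E i) = p) (hq : ∀ i j, i ≠ j → P.real (E i ∩ E j) = q) :
    variance (fun ω => ∑ i, (E i).indicator (fun _ => (1:ℝ)) ω) P =
      n * p + n * (n - 1) * q - (n * p) ^ 2 := by
  have hint : ∀ s : Set Ω, MeasurableSet s → Integrable (s.indicator (fun _ => (1:ℝ))) P :=
    fun s hs => (integrable_const 1).indicator hs
  have hm : MemLp (fun ω => ∑ i, (E i).indicator (fun _ => (1:ℝ)) ω) 2 P := by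
    refine memLp_finset_sum _ fun i _ => ?_
    exact (memLp_const 1).indicator (hE i)
  rw [variance_eq_sub hm]
  have h1 : ∫ ω, ∑ i, (E i).indicator (fun _ => (1:ℝ)) ω ∂P = n * p := by
    rw [integral_finset_sum _ fun i _ => hint _ (hE i)]
    simp [integral_indicator, hE, hp]
  have h2 : ∫ ω, ((fun ω => ∑ i, (E i).indicator (fun _ => (1:ℝ)) ω) ^ 2) ω ∂P =
      n * p + n * (n - 1) * q := by
    have : ((fun ω => ∑ i, (E i).indicator (fun _ => (1:ℝ)) ω) ^ 2) =
        fun ω => ∑ i, ∑ j, (E i ∩ E j).indicator (fun _ => (1:ℝ)) ω := by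
      ext ω
      simp only [Pi.pow_apply, sq, Finset.sum_mul_sum]
      refine Finset.sum_congr rfl fun i _ => Finset.sum_congr rfl fun j _ => ?_
      by_cases h : ω ∈ E i <;> by_cases h' : ω ∈ E j <;> simp [h, h']
    rw [this, integral_finset_sum _ fun i _ => integrable_finset_sum _ fun j _ =>
      hint _ ((hE i).inter (hE j))]
    have h3 : ∀ i j, ∫ ω, (E i ∩ E j).indicator (fun _ => (1:ℝ)) ω ∂P =
        q + if i = j then p - q else 0 := by
      intro i j
      rw [integral_indicator ((hE i).inter (hE j))]
      simp only [integral_const, MeasurableSet.univ, measureReal_restrict_apply, univ_inter,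
        smul_eq_mul, mul_one]
      split_ifs with h
      · subst h
        rw [inter_self, hp]; ring
      · rw [hq i j h]; ring
    have h4 : ∀ i, ∫ ω, ∑ j, (E i ∩ E j).indicator (fun _ => (1:ℝ)) ω ∂P = n * q + (p - q) := by
      intro i
      rw [integral_finset_sum _ fun j _ => hint _ ((hE i).inter (hE j))]
      simp [h3, Finset.sum_add_distrib]
    simp only [h4]
    simp
    ring
  rw [h2, h1]

lemma isolCount_eq {d n : ℕ} {ρ : ℝ} (hρ : 0 < ρ) : isolCount d n ρ =
    fun ω => ∑ i, (isoE d n ρ i).indicator (fun _ => (1:ℝ)) ω := by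
  ext ω
  rw [isolCount]
  refine Finset.sum_congr rfl fun i _ => ?_
  by_cases h : ω ∈ isoE d n ρ i
  · rw [if_pos ((iso_iff hρ ω i).2 h), indicator_of_mem h]
  · rw [if_neg (fun h2 => h ((iso_iff hρ ω i).1 h2)), indicator_of_notMem h]

lemma var_formula_s4 {d m : ℕ} (hd : 1 ≤ d) {ρ : ℝ} (hρ : 0 < ρ)
    (hr : 10 * ρ < sideLen d (m + 2)) :
    variance (isolCount d (m + 2) ρ) (binppLaw d (m + 2)) / ((m : ℝ) + 2) =
      (1 - phi d ρ / (m + 2)) ^ (m + 1) +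
      ((m : ℝ) + 1) * ((((m : ℝ) + 2))⁻¹ * (((m + 2) - 2 ^ d * phi d ρ) *
        (1 - 2 * phi d ρ / (m + 2)) ^ m + ∫ z, gE d ρ ((m : ℝ) + 2) m z)) -
      (m + 2) * ((1 - phi d ρ / (m + 2)) ^ 2) ^ (m + 1) := by
  haveI hL : Fact (0 < sideLen d (m + 2)) := ⟨by linarith⟩
  haveI : IsProbabilityMeasure (binppLaw d (m + 2)) := by
    unfold binppLaw; infer_instance
  have hpow := sideLen_pow hd (m + 2)
  push_cast at hpow
  rw [isolCount_eq hρ, var_sum (binppLaw d (m + 2)) (isoE d (m + 2) ρ)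
    (fun i => measurable_isoE rfl i) ((1 - phi d ρ / (m + 2)) ^ (m + 1))
    ((((m : ℝ) + 2))⁻¹ * (((m + 2) - 2 ^ d * phi d ρ) *
        (1 - 2 * phi d ρ / (m + 2)) ^ m + ∫ z, gE d ρ ((m : ℝ) + 2) m z))]
  · push_cast
    have : (m : ℝ) + 2 ≠ 0 := by positivity
    rw [div_eq_iff this]
    rw [pow_right_comm]
    ring
  · intro i
    rw [Measure.real, prob_single (m := m + 1) hd rfl i, ENNReal.toReal_pow, single_real hρ hr, hpow]
  · intro i j hij
    rw [Measure.real, prob_double hd rfl i j hij, pair_real hd hρ hr, hpow]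

lemma sideLen_tendsto {d : ℕ} (hd : 1 ≤ d) : Tendsto (fun m : ℕ => sideLen d (m + 2)) atTop atTop := by
  have h : Tendsto (fun n : ℕ => sideLen d n) atTop atTop :=
    (tendsto_rpow_atTop (by positivity)).comp tendsto_natCast_atTop_atTop
  exact h.comp (tendsto_add_atTop_nat 2)

lemma main_limit {d : ℕ} (hd : 1 ≤ d) {ρ : ℝ} (hρ : 0 < ρ) :
    Tendsto (fun n : ℕ => variance (isolCount d n ρ) (binppLaw d n) / n) atTop
        (nhds (gS d ρ)) := by
  rw [← tendsto_add_atTop_iff_nat 2]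
  set F := phi d ρ with hF
  have hinv : Tendsto (fun m : ℕ => ((m : ℝ) + 2)⁻¹) atTop (𝓝 0) :=
    tendsto_inv_atTop_zero.comp (tendsto_atTop_add_const_right _ _ tendsto_natCast_atTop_atTop)
  have hA := tendsto_pow_exp (2 * F)
  have hB := tendsto_pow_exp F
  have hG := gE_tendsto d hρ
  rw [gLim_integral hd hρ] at hG
  have hD := diff_tendsto F (phi_pos_s4 hρ)
  have hlim := (((hB.mul ((hinv.const_mul F).const_sub 1)).add
    ((hinv.const_sub 1).mul hG)).sub hD).add
    (hA.mul ((hinv.const_mul (2 ^ d * F)).const_add (2 * F - 1 - 2 ^ d * F)))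
  have e : gS d ρ = Real.exp (-F) * (1 - F * 0) + (1 - 0) * (ρ ^ d * (Jint 2 d ρ - Jint 1 d ρ)) -
      F ^ 2 * Real.exp (-(2 * F)) + Real.exp (-(2 * F)) * (2 * F - 1 - 2 ^ d * F + 2 ^ d * F * 0) := by
    rw [gS, ← hF]; ring
  rw [e]
  refine hlim.congr' ?_
  filter_upwards [(sideLen_tendsto hd).eventually_gt_atTop (10 * ρ)] with m hm
  have hv := var_formula_s4 hd hρ hm
  push_cast
  rw [hv, ← hF]
  have hn : (m : ℝ) + 2 ≠ 0 := by positivity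
  generalize (∫ z, gE d ρ ((m : ℝ) + 2) m z) = I
  generalize hy : ((1 - F / ((m : ℝ) + 2)) ^ 2) ^ (m + 1) = Y
  rw [pow_succ (1 - F / ((m : ℝ) + 2)) m, pow_succ (1 - 2 * F / ((m : ℝ) + 2)) m]
  generalize (1 - F / ((m : ℝ) + 2)) ^ m = b
  generalize (1 - 2 * F / ((m : ℝ) + 2)) ^ m = a
  field_simp
  ring

/-- (3.3) of Theorem 2.3: the normalized variance of the number of isolated points `S`
converges to `g_S(ρ)`, which is strictly positive. -/
theorem variance_isolCount_limit (d : ℕ) (hd : 1 ≤ d) (ρ : ℝ) (hρ : 0 < ρ) :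
    Tendsto (fun n : ℕ => variance (isolCount d n ρ) (binppLaw d n) / n) atTop
        (nhds (gS d ρ)) ∧
      0 < gS d ρ := by
  exact ⟨main_limit hd hρ, gS_pos hd hρ⟩

end
end
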